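/- Let r ≥ 1, let w be an irreducible continuous unitary representation of SU(2) on an (r+1)-dimensional complex Hilbert space H_w, and let β_r = Ad∘w be the (ergodic) adjoint action k ↦ w(k)(·)w(k)* of SU(2) on F = L(H_w) ≅ Mat_{r+1}(ℂ). Let v be any irreducible continuous unitary representation of SU(2) on a 3-dimensional complex Hilbert space. Then there exists no unital *-homomorphism η : F → L(H_v)⊗F satisfying η(β_{r,k}(f)) = (Ad v(k)⊗β_{r,k})(η(f)) for all k and η(f)Z_v = Z_v(1⊗f) for all f ∈ F; that is, the module representation v⊗β_r admits no structure of a full Hilbert bimodule representation of SU(2), and X_v admits no proper extension to a full bimodule representation. -/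

import Mathlib

section

/-- The compact group `SU(2)`, as the special unitary matrices in `M₂(ℂ)`. -/
abbrev SU2 : Type := ↥(Matrix.specialUnitaryGroup (Fin 2) ℂ)

variable {F : Type} [Ring F] [StarRing F] [Algebra ℂ F]
variable (β : SU2 → F ≃⋆ₐ[ℂ] F)

/-- A continuous unitary matrix representation of `SU(2)` on `Fin n`. -/
def RepData {n : ℕ} (w : SU2 → Fin n → Fin n → ℂ) : Prop :=
  (∀ i j, w 1 i j = if i = j then (1 : ℂ) else 0) ∧
  (∀ (k k' : SU2) (i j : Fin n), w (k * k') i j = ∑ l, w k i l * w k' l j) ∧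
  (∀ (k : SU2) (i j : Fin n), (∑ l, w k i l * star (w k j l)) = if i = j then (1 : ℂ) else 0) ∧
  (∀ (k : SU2) (i j : Fin n), (∑ l, star (w k l i) * w k l j) = if i = j then (1 : ℂ) else 0) ∧
  (∀ i j, Continuous fun k => w k i j)

/-- Irreducibility: trivial commutant. -/
def IsIrr {n : ℕ} (w : SU2 → Fin n → Fin n → ℂ) : Prop :=
  ∀ A : Fin n → Fin n → ℂ,
    (∀ (k : SU2) (i j : Fin n), (∑ l, A i l * w k l j) = ∑ l, w k i l * A l j) →
    ∃ c : ℂ, ∀ i j, A i j = if i = j then c else 0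

/-- A pair `(E, η)` defining a full Hilbert bimodule `SU(2)`-representation on the
intermediate submodule `X_v ⊆ E (Hv ⊗ F) ⊆ Hv ⊗ F`: an invariant projection `E ≥ E_v`
together with a unital *-homomorphism `η` into the corner satisfying the two displayed
conditions `η (β_k f) = (Ad v(k) ⊗ β_k)(η f)` and `η(f) Z_v = Z_v (1 ⊗ f)`. -/
def IsFullStructure {n : ℕ} (v : SU2 → Fin n → Fin n → ℂ)
    (E : Fin n → Fin n → F) (η : F → Fin n → Fin n → F) : Prop :=
  (∀ i j, (∑ l, E i l * E l j) = E i j) ∧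
  (∀ i j, star (E j i) = E i j) ∧
  (∀ (k : SU2) (i j : Fin n), E i j = ∑ p, ∑ q, (v k i p * star (v k j q)) • β k (E p q)) ∧
  (∀ c : Fin n → F, (∀ (k : SU2) (j : Fin n), β k (c j) = ∑ i, v k i j • c i) →
    ∀ i, (∑ j, E i j * star (c j)) = star (c i)) ∧
  (∀ i j, η 1 i j = E i j) ∧
  (∀ (f f' : F) (i j : Fin n), (∑ l, η f i l * η f' l j) = η (f * f') i j) ∧
  (∀ (f : F) (i j : Fin n), star (η f j i) = η (star f) i j) ∧
  (∀ (c : ℂ) (f f' : F) (i j : Fin n), η (c • f + f') i j = c • η f i j + η f' i j) ∧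
  (∀ (k : SU2) (f : F) (i j : Fin n),
    η (β k f) i j = ∑ p, ∑ q, (v k i p * star (v k j q)) • β k (η f p q)) ∧
  (∀ (f : F) (c : Fin n → F), (∀ (k : SU2) (j : Fin n), β k (c j) = ∑ i, v k i j • c i) →
    ∀ i, (∑ j, η f i j * star (c j)) = star (c i) * f)

namespace S17
noncomputable section
open Complex ComplexConjugate

def mk (x y : ℂ) (h : x * conj x + y * conj y = 1) : SU2 :=
  ⟨!![x, -conj y; y, conj x], by
    rw [Matrix.mem_specialUnitaryGroup_iff, Matrix.mem_unitaryGroup_iff]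
    constructor
    · ext i j
      fin_cases i <;> fin_cases j <;>
        simp [Matrix.mul_apply, Matrix.star_apply, Fin.sum_univ_two] <;>
        first
        | ring1
        | linear_combination h
    · rw [Matrix.det_fin_two_of]; linear_combination h⟩

@[simp] lemma mk00 (x y h) : (mk x y h).1 0 0 = x := rfl
@[simp] lemma mk10 (x y h) : (mk x y h).1 1 0 = y := rfl
@[simp] lemma mk01 (x y h) : (mk x y h).1 0 1 = -conj y := rfl
@[simp] lemma mk11 (x y h) : (mk x y h).1 1 1 = conj x := rfl

lemma star_adj (g : SU2) : star g.1 = g.1.adjugate := by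
  have h := g.2
  rw [Matrix.mem_specialUnitaryGroup_iff] at h
  have h1 := Matrix.mem_unitaryGroup_iff'.1 h.1
  have h2 := Matrix.mul_adjugate g.1
  rw [h.2, one_smul] at h2
  calc star g.1 = star g.1 * (g.1 * g.1.adjugate) := by rw [h2, mul_one]
    _ = g.1.adjugate := by rw [← mul_assoc, h1, one_mul]

lemma g11 (g : SU2) : g.1 1 1 = conj (g.1 0 0) := by
  have := congrFun (congrFun (star_adj g) 0) 0
  rw [Matrix.adjugate_fin_two] at this
  simpa [Matrix.star_apply] using this.symm

lemma g01 (g : SU2) : g.1 0 1 = -conj (g.1 1 0) := by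
  have := congrFun (congrFun (star_adj g) 0) 1
  rw [Matrix.adjugate_fin_two] at this
  simp [Matrix.star_apply] at this
  rw [this]; simp

lemma gnorm (g : SU2) : g.1 0 0 * conj (g.1 0 0) + g.1 1 0 * conj (g.1 1 0) = 1 := by
  have h := g.2
  rw [Matrix.mem_specialUnitaryGroup_iff] at h
  have := h.2
  rw [Matrix.det_fin_two, g11, g01] at this
  linear_combination this

lemma ext2 {g h : SU2} (h0 : g.1 0 0 = h.1 0 0) (h1 : g.1 1 0 = h.1 1 0) : g = h := by
  apply Subtype.ext
  ext i j
  fin_cases i <;> fin_cases j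
  · exact h0
  · show g.1 0 1 = h.1 0 1
    rw [g01, g01, h1]
  · exact h1
  · show g.1 1 1 = h.1 1 1
    rw [g11, g11, h0]

@[simp] lemma mul00 (g h : SU2) : (g * h).1 0 0 = g.1 0 0 * h.1 0 0 + g.1 0 1 * h.1 1 0 := by
  show (g.1 * h.1) 0 0 = _
  simp [Matrix.mul_apply, Fin.sum_univ_two]
@[simp] lemma mul10 (g h : SU2) : (g * h).1 1 0 = g.1 1 0 * h.1 0 0 + g.1 1 1 * h.1 1 0 := by
  show (g.1 * h.1) 1 0 = _
  simp [Matrix.mul_apply, Fin.sum_univ_two]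
@[simp] lemma mul01 (g h : SU2) : (g * h).1 0 1 = g.1 0 0 * h.1 0 1 + g.1 0 1 * h.1 1 1 := by
  show (g.1 * h.1) 0 1 = _
  simp [Matrix.mul_apply, Fin.sum_univ_two]
@[simp] lemma mul11 (g h : SU2) : (g * h).1 1 1 = g.1 1 0 * h.1 0 1 + g.1 1 1 * h.1 1 1 := by
  show (g.1 * h.1) 1 1 = _
  simp [Matrix.mul_apply, Fin.sum_univ_two]
@[simp] lemma one00 : (1 : SU2).1 0 0 = 1 := rfl
@[simp] lemma one10 : (1 : SU2).1 1 0 = 0 := rfl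

lemma csq (θ : ℝ) : (Real.cos θ : ℂ) * Real.cos θ + Real.sin θ * Real.sin θ = 1 := by
  have := Real.cos_sq_add_sin_sq θ
  norm_cast
  linarith

lemma Isq : (I : ℂ) * I = -1 := I_mul_I

def dd (θ : ℝ) : SU2 := mk (Real.cos θ + Real.sin θ * I) 0 (by
  simp only [map_add, map_mul, conj_ofReal, conj_I, map_zero]
  linear_combination csq θ - Real.sin θ ^ 2 * Isq)
def rJ (θ : ℝ) : SU2 := mk (Real.cos θ) (Real.sin θ) (by
  simp only [conj_ofReal]
  linear_combination csq θ)
def rK (θ : ℝ) : SU2 := mk (Real.cos θ) (-(Real.sin θ * I)) (by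
  simp only [map_neg, map_mul, conj_ofReal, conj_I]
  linear_combination csq θ - Real.sin θ ^ 2 * Isq)
def cc : SU2 := mk ((1 + I) / 2) ((1 - I) / 2) (by
  simp [-ofReal_cos, -ofReal_sin, map_ofNat]
  linear_combination (-1/2) * Isq)
def nn : SU2 := mk (-1) 0 (by simp)

lemma dd_add (a b : ℝ) : dd (a + b) = dd a * dd b := by
  apply ext2 <;> simp [dd, Complex.cos_add, Complex.sin_add]
  linear_combination (-(Complex.sin a * Complex.sin b)) * Isq
lemma dd_zero : dd 0 = 1 := by
  apply ext2 <;> simp [dd]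
lemma rJ_zero : rJ 0 = 1 := by
  apply ext2 <;> simp [rJ]
lemma rK_zero : rK 0 = 1 := by
  apply ext2 <;> simp [rK]
lemma cc_dd (θ : ℝ) : cc * dd θ = rJ θ * cc := by
  apply ext2 <;> simp [-ofReal_cos, -ofReal_sin, map_ofNat, dd, cc, rJ] <;> ring_nf <;> simp <;> ring
lemma cc_rJ (θ : ℝ) : cc * rJ θ = rK θ * cc := by
  apply ext2 <;> simp [-ofReal_cos, -ofReal_sin, map_ofNat, rK, cc, rJ] <;> ring_nf <;> simp <;> ring
lemma cc_rK (θ : ℝ) : cc * rK θ = dd θ * cc := by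
  apply ext2 <;> simp [-ofReal_cos, -ofReal_sin, map_ofNat, rK, cc, dd] <;> ring_nf <;> simp <;> ring
lemma nn_comm (g : SU2) : nn * g = g * nn := by
  apply ext2 <;> simp [nn]
lemma nn_nn : nn * nn = 1 := by
  apply ext2 <;> simp [nn]
lemma cc3 : cc * cc * cc = nn := by
  apply ext2 <;> simp [nn, cc, map_ofNat] <;> ring_nf <;> simp <;> ring_nf
abbrev ii : SU2 := dd (Real.pi / 2)
abbrev jj : SU2 := rJ (Real.pi / 2)
lemma ii_ii : ii * ii = nn := by
  apply ext2 <;> simp [nn, dd]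
lemma jj_jj : jj * jj = nn := by
  apply ext2 <;> simp [nn, rJ]
lemma jj_ii : jj * ii = nn * (ii * jj) := by
  apply ext2 <;> simp [nn, dd, rJ]
lemma ii_jj : ii * jj = rK (Real.pi / 2) := by
  apply ext2 <;> simp [rK, dd, rJ]
lemma ii_rJ (θ : ℝ) : ii * rJ θ = rJ (-θ) * ii := by
  apply ext2 <;> simp [dd, rJ, -ofReal_cos, -ofReal_sin]
  all_goals ring
lemma jj_dd (θ : ℝ) : jj * dd θ = dd (-θ) * jj := by
  apply ext2 <;> simp [dd, rJ, -ofReal_cos, -ofReal_sin]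
lemma rJ_add (a b : ℝ) : rJ (a + b) = rJ a * rJ b := by
  have h : rJ (a+b) * cc = rJ a * rJ b * cc := by
    rw [← cc_dd, dd_add, mul_assoc, ← cc_dd, ← mul_assoc, ← mul_assoc, cc_dd]
  exact mul_right_cancel h
lemma dd_eq (θ : ℝ) : (dd θ).1 0 0 = exp (θ * I) := by
  simp [dd, exp_mul_I]

lemma decomp (g : SU2) : ∃ γ : ℝ,
    g = dd (arg (g.1 0 0)) * (dd γ * rJ (Real.arcsin ‖g.1 1 0‖) * dd (-γ)) := by
  have hn := gnorm g
  rw [mul_conj, mul_conj, normSq_eq_norm_sq, normSq_eq_norm_sq] at hn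
  have hn' : ‖g.1 0 0‖ ^ 2 + ‖g.1 1 0‖ ^ 2 = 1 := by exact_mod_cast hn
  have hy1 : ‖g.1 1 0‖ ≤ 1 := by
    nlinarith [sq_nonneg ‖g.1 0 0‖, norm_nonneg (g.1 1 0)]
  have hs : Real.sin (Real.arcsin ‖g.1 1 0‖) = ‖g.1 1 0‖ :=
    Real.sin_arcsin (by linarith [norm_nonneg (g.1 1 0)]) hy1
  have hc : Real.cos (Real.arcsin ‖g.1 1 0‖) = ‖g.1 0 0‖ := by
    rw [Real.cos_arcsin, Real.sqrt_eq_iff_mul_self_eq] <;> nlinarith [norm_nonneg (g.1 0 0)]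
  have e1 : ∀ θ, (dd θ).1 1 1 = exp (-(θ * I)) := by
    intro θ
    rw [g11, dd_eq, ← exp_conj]; simp
  have e2 : ∀ θ, (dd θ).1 1 0 = 0 := fun θ => rfl
  have e3 : ∀ θ, (dd θ).1 0 1 = 0 := fun θ => by rw [g01, e2]; simp
  set α := arg (g.1 0 0) with hα
  refine ⟨-(α + arg (g.1 1 0)) / 2, ?_⟩
  set γ := -(α + arg (g.1 1 0)) / 2 with hγ
  apply ext2
  · simp only [mul00, mul10, mul01, mul11, e1, e2, e3, dd_eq]
    simp only [rJ, mk00, mk10, mk01, mk11, hs, hc]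
    have : exp (γ * I) * exp (((-γ : ℝ) : ℂ) * I) = 1 := by
      rw [← exp_add]; simp
    have h3 := norm_mul_exp_arg_mul_I (g.1 0 0)
    rw [← hα] at h3
    linear_combination (-1) * h3 - (‖g.1 0 0‖ : ℂ) * exp (α * I) * this
  · simp only [mul00, mul10, mul01, mul11, e1, e2, e3, dd_eq]
    simp only [rJ, mk00, mk10, mk01, mk11, hs, hc]
    have : exp (-(α * I)) * (exp (-(γ * I)) * exp (((-γ : ℝ) : ℂ) * I)) = exp (arg (g.1 1 0) * I) := by
      rw [← exp_add, ← exp_add]; congr 1; rw [hγ]; push_cast; ring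
    have h3 := norm_mul_exp_arg_mul_I (g.1 1 0)
    linear_combination (-1) * h3 - (‖g.1 1 0‖ : ℂ) * this

lemma dd_cont : Continuous dd := by
  apply Continuous.subtype_mk
  fun_prop

end
end S17

namespace S17
noncomputable section
open Complex ComplexConjugate

lemma triv_of_ii {R : Type*} [Monoid R] (ρ : SU2 → R) (hm : ∀ g h, ρ (g * h) = ρ g * ρ h)
    (hi : ρ ii = ρ 1) (g : SU2) : ρ g = ρ 1 := by
  have mul : ∀ a b, ρ a = ρ 1 → ρ b = ρ 1 → ρ (a * b) = ρ 1 := by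
    intro a b ha hb
    rw [hm, ha, hb, ← hm, one_mul]
  have cnj : ∀ a n, ρ n = ρ 1 → ρ (a * n * a⁻¹) = ρ 1 := by
    intro a n hn
    rw [hm, hm, hn, ← hm, ← hm, mul_one, mul_inv_cancel]
  have inv : ∀ n, ρ n = ρ 1 → ρ n⁻¹ = ρ 1 := by
    intro n hn
    calc ρ n⁻¹ = ρ n⁻¹ * ρ n := by rw [hn, ← hm, mul_one]
      _ = ρ 1 := by rw [← hm, inv_mul_cancel]
  have hJ2 : ∀ θ, ρ (rJ (θ + θ)) = ρ 1 := by
    intro θ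
    have : rJ (θ + θ) = (rJ θ * ii * (rJ θ)⁻¹) * ii⁻¹ := by
      rw [eq_mul_inv_iff_mul_eq, eq_mul_inv_iff_mul_eq, mul_assoc, ii_rJ, ← mul_assoc,
        ← rJ_add]
      congr 2; ring
    rw [this]
    exact mul _ _ (cnj _ _ hi) (inv _ hi)
  have hJ : ∀ θ, ρ (rJ θ) = ρ 1 := by
    intro θ
    have := hJ2 (θ / 2)
    rwa [add_halves] at this
  have hd : ∀ θ, ρ (dd θ) = ρ 1 := by
    intro θ
    have : dd θ = cc⁻¹ * rJ θ * cc⁻¹⁻¹ := by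
      rw [inv_inv, mul_assoc, ← cc_dd, inv_mul_cancel_left]
    rw [this]
    exact cnj _ _ (hJ θ)
  obtain ⟨γ, hγ⟩ := decomp g
  rw [hγ]
  exact mul _ _ (hd _) (mul _ _ (mul _ _ (hd _) (hJ _)) (hd _))

section banach
variable {𝔸 : Type*} [NormedRing 𝔸] [NormedAlgebra ℝ 𝔸] [CompleteSpace 𝔸]

open intervalIntegral in
lemma oneparam (f : ℝ → 𝔸) (hc : Continuous f) (h0 : f 0 = 1)
    (hadd : ∀ s t, f (s + t) = f s * f t) : ∃ A : 𝔸, HasDerivAt f A 0 := by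
  have hi : ∀ a b, IntervalIntegrable f MeasureTheory.volume a b := fun a b => hc.intervalIntegrable a b
  have hF : ∀ t, HasDerivAt (fun u => ∫ s in (0:ℝ)..u, f s) (f t) t := fun t =>
    intervalIntegral.integral_hasDerivAt_right (hi _ _) (hc.stronglyMeasurableAtFilter _ _) hc.continuousAt
  -- invertible average
  obtain ⟨δ, hδ, hu⟩ : ∃ δ : ℝ, δ ≠ 0 ∧ IsUnit (∫ s in (0:ℝ)..δ, f s) := by
    have h1 := (hF 0).tendsto_slope_zero
    rw [h0] at h1
    have hopen : ∀ᶠ x in nhds (1:𝔸), IsUnit x := Units.isOpen.mem_nhds isUnit_one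
    have h2 := h1.eventually hopen
    have h3 : ∀ᶠ t in nhdsWithin (0:ℝ) {0}ᶜ, t ≠ 0 := self_mem_nhdsWithin
    obtain ⟨t, ht, ht0⟩ := (h2.and h3).exists
    refine ⟨t, ht0, ?_⟩
    simp only [zero_add, integral_same, sub_zero] at ht
    have : (∫ s in (0:ℝ)..t, f s) = algebraMap ℝ 𝔸 t * (t⁻¹ • ∫ s in (0:ℝ)..t, f s) := by
      rw [← Algebra.smul_def, smul_smul, mul_inv_cancel₀ ht0, one_smul]
    rw [this]
    exact ((IsUnit.mk0 t ht0).map (algebraMap ℝ 𝔸)).mul ht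
  obtain ⟨u, hu⟩ := hu
  have key : ∀ t, f t = ((∫ s in (0:ℝ)..(t+δ), f s) - ∫ s in (0:ℝ)..t, f s) * (↑u⁻¹ : 𝔸) := by
    intro t
    rw [Units.eq_mul_inv_iff_mul_eq, hu, integral_interval_sub_left (hi _ _) (hi _ _)]
    have h4 := (ContinuousLinearMap.mul ℝ 𝔸 (f t)).intervalIntegral_comp_comm (hi 0 δ)
    simp only [ContinuousLinearMap.mul_apply'] at h4
    rw [← h4]
    simp only [← hadd]
    rw [intervalIntegral.integral_comp_add_left, add_zero]
  refine ⟨(f (0 + δ) - f 0) * (↑u⁻¹ : 𝔸), ?_⟩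
  have := (((hF (0+δ)).comp_add_const 0 δ).sub (hF 0)).mul_const (↑u⁻¹ : 𝔸)
  exact this.congr_of_eventuallyEq (Filter.Eventually.of_forall key)

lemma scomp' {f : ℝ → 𝔸} {u : ℝ → ℝ} {A : 𝔸} {c : ℝ} (hf : HasDerivAt f A (u 0))
    (hu : HasDerivAt u c 0) : HasDerivAt (fun t => f (u t)) (c • A) 0 :=
  HasDerivAt.scomp (0:ℝ) hf hu

lemma der_cos (a : ℝ) : HasDerivAt (fun t : ℝ => ((Real.cos (a * t) : ℝ) : ℂ)) 0 0 := by
  have d1 : HasDerivAt (fun t : ℝ => a * t) a 0 := by simpa using (hasDerivAt_id (0:ℝ)).const_mul a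
  simpa using d1.cos.ofReal_comp

lemma der_sin (a : ℝ) : HasDerivAt (fun t : ℝ => ((Real.sin (a * t) : ℝ) : ℂ)) a 0 := by
  have d1 : HasDerivAt (fun t : ℝ => a * t) a 0 := by simpa using (hasDerivAt_id (0:ℝ)).const_mul a
  simpa using d1.sin.ofReal_comp

lemma o_lemma (ρ : SU2 →* 𝔸) {C : ℝ} (hb : ∀ g, ‖ρ g‖ ≤ C) {A B : 𝔸}
    (hA : HasDerivAt (fun t => ρ (dd t)) A 0) (hB : HasDerivAt (fun t => ρ (rJ t)) B 0)
    (h : ℝ → SU2) (h0 : h 0 = 1) (hx : HasDerivAt (fun t => (h t).1 0 0) 0 0)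
    (hy : HasDerivAt (fun t => (h t).1 1 0) 0 0) :
    HasDerivAt (fun t => ρ (h t)) 0 0 := by
  have hα : HasDerivAt (fun t => arg ((h t).1 0 0)) 0 0 := by
    have h1 : HasDerivAt (fun t => Complex.log ((h t).1 0 0)) (0 / (h 0).1 0 0) 0 := by
      apply hx.clog_real
      rw [h0, one00]; exact one_mem_slitPlane
    have h2 := (Complex.imCLM.hasFDerivAt.comp_hasDerivAt (0:ℝ) h1)
    simpa [Function.comp_def, log_im] using h2
  have hφ : HasDerivAt (fun t => Real.arcsin ‖(h t).1 1 0‖) 0 0 := by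
    have h1 : HasDerivAt (fun t => ‖(h t).1 1 0‖) 0 0 := by
      rw [hasDerivAt_iff_isLittleO_nhds_zero] at hy ⊢
      simp only [h0, one10, zero_add, norm_zero, sub_zero, smul_zero] at hy ⊢
      exact hy.norm_left
    have h2 : HasDerivAt Real.arcsin (1 / √(1 - ‖(h 0).1 1 0‖ ^ 2)) ‖(h 0).1 1 0‖ := by
      apply Real.hasDerivAt_arcsin <;> rw [h0, one10] <;> norm_num
    have := HasDerivAt.comp (0:ℝ) h2 h1
    rw [mul_zero] at this
    exact this
  have e1 : HasDerivAt (fun t => ρ (dd (arg ((h t).1 0 0)))) 0 0 := by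
    have hA' : HasDerivAt (fun t => ρ (dd t)) A (arg ((h 0).1 0 0)) := by
      rw [h0, one00, arg_one]; exact hA
    simpa using scomp' hA' hα
  have e2 : HasDerivAt (fun t => ρ (rJ (Real.arcsin ‖(h t).1 1 0‖))) 0 0 := by
    have hB' : HasDerivAt (fun t => ρ (rJ t)) B (Real.arcsin ‖(h 0).1 1 0‖) := by
      rw [h0, one10, norm_zero, Real.arcsin_zero]; exact hB
    simpa using scomp' hB' hφ
  choose γ hγ using fun t => decomp (h t)
  have e3 : HasDerivAt (fun t => ρ (dd (γ t) * rJ (Real.arcsin ‖(h t).1 1 0‖) * dd (-γ t))) 0 0 := by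
    rw [hasDerivAt_iff_isLittleO_nhds_zero] at e2 ⊢
    simp only [h0, one10, zero_add, norm_zero, sub_zero, smul_zero, Real.arcsin_zero, rJ_zero,
      mul_one, ← dd_add, add_neg_cancel, dd_zero, map_one] at e2 ⊢
    refine Asymptotics.IsBigO.trans_isLittleO ?_ e2
    refine Asymptotics.IsBigO.of_bound (C * C) (Filter.Eventually.of_forall fun t => ?_)
    have : ρ (dd (γ t) * rJ (Real.arcsin ‖(h t).1 1 0‖) * dd (-γ t)) - 1 =
        ρ (dd (γ t)) * (ρ (rJ (Real.arcsin ‖(h t).1 1 0‖)) - 1) * ρ (dd (-γ t)) := by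
      rw [map_mul, map_mul, mul_sub, sub_mul, mul_one, ← map_mul ρ (dd (γ t)) (dd (-γ t)), ← dd_add,
        add_neg_cancel, dd_zero, map_one]
    rw [this]
    have hC : 0 ≤ C := (norm_nonneg _).trans (hb 1)
    calc _ ≤ ‖ρ (dd (γ t))‖ * ‖ρ (rJ (Real.arcsin ‖(h t).1 1 0‖)) - 1‖ * ‖ρ (dd (-γ t))‖ := norm_mul₃_le
      _ ≤ C * ‖ρ (rJ (Real.arcsin ‖(h t).1 1 0‖)) - 1‖ * C := by
        gcongr
        · exact hb _
        · exact hb _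
      _ = _ := by ring
  have e4 := e1.mul e3
  simp only [zero_mul, mul_zero, add_zero] at e4
  refine e4.congr_of_eventuallyEq (Filter.Eventually.of_forall fun t => ?_)
  show ρ (h t) = _ * _
  rw [← map_mul, ← hγ]

lemma lie (ρ : SU2 →* 𝔸) (hc : Continuous ρ) {C : ℝ} (hb : ∀ g, ‖ρ g‖ ≤ C) :
    ∃ A : 𝔸, HasDerivAt (fun t => ρ (dd t)) A 0 ∧
      ∀ φ, ρ (dd φ) * (ρ cc * A * ρ cc⁻¹) * ρ (dd (-φ)) =
        Real.cos (2 * φ) • (ρ cc * A * ρ cc⁻¹) +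
        Real.sin (2 * φ) • (ρ cc * (ρ cc * A * ρ cc⁻¹) * ρ cc⁻¹) := by
  obtain ⟨A, hA⟩ := oneparam (fun t => ρ (dd t)) (hc.comp dd_cont) (by simp [dd_zero])
    (by intro s t; simp [dd_add])
  refine ⟨A, hA, fun φ => ?_⟩
  have hJ : HasDerivAt (fun t => ρ (rJ t)) (ρ cc * A * ρ cc⁻¹) 0 := by
    have := (hA.const_mul (ρ cc)).mul_const (ρ cc⁻¹)
    refine this.congr_of_eventuallyEq (Filter.Eventually.of_forall fun t => ?_)
    show _ = _ * _ * _
    rw [← map_mul, ← map_mul, cc_dd, mul_inv_cancel_right]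
  set AJ := ρ cc * A * ρ cc⁻¹ with hAJ
  have hK : HasDerivAt (fun t => ρ (rK t)) (ρ cc * AJ * ρ cc⁻¹) 0 := by
    have := (hJ.const_mul (ρ cc)).mul_const (ρ cc⁻¹)
    refine this.congr_of_eventuallyEq (Filter.Eventually.of_forall fun t => ?_)
    show _ = _ * _ * _
    rw [← map_mul, ← map_mul, cc_rJ, mul_inv_cancel_right]
  set AK := ρ cc * AJ * ρ cc⁻¹ with hAK
  set a := Real.cos (2 * φ) with ha
  set b := Real.sin (2 * φ) with hb'
  have d1 : HasDerivAt (fun t : ℝ => a * t) a 0 := by simpa using (hasDerivAt_id (0:ℝ)).const_mul a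
  have d2 : HasDerivAt (fun t : ℝ => b * t) b 0 := by simpa using (hasDerivAt_id (0:ℝ)).const_mul b
  have d3 : HasDerivAt (fun t : ℝ => - t) (-1) 0 := (hasDerivAt_id (0:ℝ)).neg
  have f1 : HasDerivAt (fun t => ρ (rJ (a * t))) (a • AJ) 0 :=
    scomp' (by simpa using hJ) d1
  have f2 : HasDerivAt (fun t => ρ (rK (b * t))) (b • AK) 0 :=
    scomp' (by simpa using hK) d2
  have f3 : HasDerivAt (fun t => ρ (rJ (-t))) ((-1 : ℝ) • AJ) 0 :=
    scomp' (by simpa using hJ) d3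
  have f4 := (f3.const_mul (ρ (dd φ))).mul_const (ρ (dd (-φ)))
  have f5 := (f1.mul f2).mul f4
  have hco : (Real.cos φ : ℂ) ^ 2 - Real.sin φ ^ 2 = a := by
    rw [ha, Real.cos_two_mul]
    simp only [ofReal_sub, ofReal_mul, ofReal_pow, ofReal_ofNat, ofReal_one]
    linear_combination (-1) * csq φ
  have hsi : 2 * (Real.cos φ : ℂ) * Real.sin φ = b := by
    rw [hb', Real.sin_two_mul]
    simp only [ofReal_mul, ofReal_ofNat]; ring
  have u1 : ((Real.cos φ : ℂ) + Real.sin φ * I) * (Real.cos φ + -(Real.sin φ * I)) = 1 := by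
    linear_combination csq φ - (Real.sin φ : ℂ) ^ 2 * Isq
  have u2 : ((Real.cos φ : ℂ) + -(Real.sin φ * I)) * (Real.cos φ + -(Real.sin φ * I)) = a - b * I := by
    linear_combination hco - I * hsi + (Real.sin φ : ℂ) ^ 2 * Isq
  have p1 := der_cos a
  have p2 := der_sin a
  have p3 := der_cos b
  have p4 := der_sin b
  have p5 := der_cos 1
  have p6 := der_sin 1
  have q1 : HasDerivAt (fun t => (rJ (a * t) * rK (b * t) * (dd φ * rJ (-t) * dd (-φ))).1 0 0) 0 0 := by
    have := (((p1.mul p3).add ((p2.mul p4).mul_const I)).mul p5).add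
      (((p2.mul p3).add ((p1.mul p4).mul_const I)).mul (p6.mul_const (a - b * I)))
    simp only [mul_zero, Real.cos_zero, Real.sin_zero, ofReal_zero, ofReal_one, zero_mul, mul_one,
      add_zero, zero_add, one_mul, Pi.add_apply, Pi.mul_apply] at this
    refine this.congr_of_eventuallyEq (Filter.Eventually.of_forall fun t => ?_)
    simp [rJ, rK, dd, -ofReal_cos, -ofReal_sin]
    linear_combination (Real.cos (a * t) * Real.cos (b * t) + Real.sin (a * t) * (Real.sin (b * t) * I)) *
        (Real.cos t) * u1 + (Real.cos (a * t) * (Real.sin (b * t) * I) + Real.sin (a * t) * Real.cos (b * t)) *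
        Real.sin t * u2
  have q2 : HasDerivAt (fun t => (rJ (a * t) * rK (b * t) * (dd φ * rJ (-t) * dd (-φ))).1 1 0) 0 0 := by
    have := (((p2.mul p3).sub ((p1.mul p4).mul_const I)).mul p5).sub
      (((p1.mul p3).sub ((p2.mul p4).mul_const I)).mul (p6.mul_const (a - b * I)))
    simp only [mul_zero, Real.cos_zero, Real.sin_zero, ofReal_zero, ofReal_one, zero_mul, mul_one,
      add_zero, zero_add, one_mul, Pi.sub_apply, Pi.mul_apply, sub_zero, sub_self] at this
    refine this.congr_of_eventuallyEq (Filter.Eventually.of_forall fun t => ?_)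
    simp [rJ, rK, dd, -ofReal_cos, -ofReal_sin]
    linear_combination (Real.sin (a * t) * Real.cos (b * t) - Real.cos (a * t) * (Real.sin (b * t) * I)) *
        (Real.cos t) * u1 - (Real.cos (a * t) * Real.cos (b * t) - Real.sin (a * t) * (Real.sin (b * t) * I)) *
        Real.sin t * u2
  have o := o_lemma ρ hb hA hJ (fun t => rJ (a * t) * rK (b * t) * (dd φ * rJ (-t) * dd (-φ)))
    (by simp [rJ_zero, rK_zero, ← dd_add, dd_zero]) q1 q2
  have u := o.unique (f5.congr_of_eventuallyEq (Filter.Eventually.of_forall fun t => by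
    simp [map_mul]))
  have z : ρ (dd φ) * ρ (dd (-φ)) = 1 := by rw [← map_mul, ← dd_add]; simp [dd_zero]
  simp [rJ_zero, rK_zero, z] at u
  rw [← sub_eq_add_neg] at u
  exact (sub_eq_zero.1 u.symm).symm
end banach
end
end S17

namespace S17
noncomputable section
open Complex ComplexConjugate

section banach2
variable {𝔸 : Type*} [NormedRing 𝔸] [NormedAlgebra ℝ 𝔸] (ρ : SU2 →* 𝔸) {A : 𝔸}

lemma der_all (hA : HasDerivAt (fun t => ρ (dd t)) A 0) (t : ℝ) :
    HasDerivAt (fun t => ρ (dd t)) (ρ (dd t) * A) t := by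
  have h1 : HasDerivAt (fun s => ρ (dd (s - t))) A t := by
    have hA' : HasDerivAt (fun t => ρ (dd t)) A (t - t) := by simpa using hA
    exact hA'.comp_sub_const t t
  have := h1.const_mul (ρ (dd t))
  refine this.congr_of_eventuallyEq (Filter.Eventually.of_forall fun s => ?_)
  show _ = _ * _
  rw [← map_mul, ← dd_add, add_sub_cancel]

lemma der_neg (hA : HasDerivAt (fun t => ρ (dd t)) A 0) (t : ℝ) :
    HasDerivAt (fun t => ρ (dd (-t))) (-(ρ (dd (-t)) * A)) t := by
  have h := der_all ρ hA (-t)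
  have := HasDerivAt.scomp t h (hasDerivAt_neg t)
  simpa [Function.comp_def] using this

lemma A_comm (hA : HasDerivAt (fun t => ρ (dd t)) A 0) (s : ℝ) :
    ρ (dd s) * A = A * ρ (dd s) := by
  have h1 := hA.const_mul (ρ (dd s))
  have h2 := hA.mul_const (ρ (dd s))
  refine h1.unique (h2.congr_of_eventuallyEq (Filter.Eventually.of_forall fun t => ?_))
  show _ * _ = _ * _
  rw [← map_mul, ← map_mul, ← dd_add, ← dd_add, add_comm]

lemma A_anti (hA : HasDerivAt (fun t => ρ (dd t)) A 0) :
    ρ jj * A = -(A * ρ jj) := by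
  have h1 := hA.const_mul (ρ jj)
  have h2 := (der_neg ρ hA 0).mul_const (ρ jj)
  simp only [neg_zero, dd_zero, map_one, one_mul, neg_mul] at h2
  refine h1.unique (h2.congr_of_eventuallyEq (Filter.Eventually.of_forall fun t => ?_))
  show _ * _ = _ * _
  rw [← map_mul, ← map_mul, jj_dd]

lemma fix_of_A (hA : HasDerivAt (fun t => ρ (dd t)) A 0) {X Y : 𝔸} {c : ℝ}
    (hX : A * X = c • Y) (hY : A * Y = -(c • X)) (t : ℝ) :
    ρ (dd t) * X = Real.cos (c * t) • X + Real.sin (c * t) • Y := by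
  have key : ∀ s, HasDerivAt (fun s => ρ (dd (-s)) * (Real.cos (c * s) • X + Real.sin (c * s) • Y)) 0 s := by
    intro s
    have d1 : HasDerivAt (fun t : ℝ => c * t) c s := by simpa using (hasDerivAt_id s).const_mul c
    have h := (der_neg ρ hA s).mul ((d1.cos.smul_const X).add (d1.sin.smul_const Y))
    refine h.congr_deriv ?_
    simp only [Pi.add_apply, neg_mul, mul_assoc, mul_add, mul_smul_comm, hX, hY, smul_neg, mul_neg, neg_smul,
      smul_smul]
    rw [mul_comm (Real.cos _) c, mul_comm (Real.sin _) c]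
    abel
  have h2 := is_const_of_deriv_eq_zero (fun s => (key s).differentiableAt) (fun s => (key s).deriv) t 0
  simp only [mul_zero, neg_zero, dd_zero, map_one, Real.cos_zero, Real.sin_zero, one_smul, zero_smul,
    add_zero, one_mul] at h2
  nth_rw 1 [← h2]
  rw [← mul_assoc, ← map_mul, ← dd_add]
  simp [dd_zero]

lemma A_of_fix (hA : HasDerivAt (fun t => ρ (dd t)) A 0) {X : 𝔸} (h : ∀ t, ρ (dd t) * X = X) :
    A * X = 0 := by
  have h1 := hA.mul_const X
  simp only [h] at h1
  exact h1.unique (hasDerivAt_const _ _)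

lemma bracket (hA : HasDerivAt (fun t => ρ (dd t)) A 0) {B C : 𝔸}
    (h : ∀ φ, ρ (dd φ) * B * ρ (dd (-φ)) = Real.cos (2 * φ) • B + Real.sin (2 * φ) • C) :
    A * B - B * A = (2 : ℝ) • C := by
  have h1 := (hA.mul_const B).mul (der_neg ρ hA 0)
  have d1 : HasDerivAt (fun t : ℝ => 2 * t) 2 0 := by simpa using (hasDerivAt_id (0:ℝ)).const_mul 2
  have h2 := (d1.cos.smul_const B).add (d1.sin.smul_const C)
  have := h1.unique (h2.congr_of_eventuallyEq (Filter.Eventually.of_forall h))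
  simpa [dd_zero, sub_eq_add_neg] using this

end banach2

lemma gen (S : SU2 → Prop) (hm : ∀ a b, S a → S b → S (a * b)) (hd : ∀ t, S (dd t)) (hc : S cc)
    (g : SU2) : S g := by
  have hn : S nn := by rw [← ii_ii]; exact hm _ _ (hd _) (hd _)
  have hci : S cc⁻¹ := by
    have : cc⁻¹ = nn * (cc * cc) := by
      rw [inv_eq_iff_mul_eq_one, ← mul_assoc, ← nn_comm, mul_assoc, ← mul_assoc cc, cc3, nn_nn]
    rw [this]; exact hm _ _ hn (hm _ _ hc hc)
  have hJ : ∀ t, S (rJ t) := by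
    intro t
    have : rJ t = cc * dd t * cc⁻¹ := by rw [cc_dd, mul_inv_cancel_right]
    rw [this]; exact hm _ _ (hm _ _ hc (hd _)) hci
  obtain ⟨γ, hγ⟩ := decomp g
  rw [hγ]
  exact hm _ _ (hd _) (hm _ _ (hm _ _ (hd _) (hJ _)) (hd _))

lemma cc_eq : cc = dd (Real.pi / 4) * rJ (Real.pi / 4) := by
  have h : ((√2 : ℝ) : ℂ) * (√2 : ℝ) = 2 := by
    norm_cast; simp
  apply ext2 <;> simp [cc, dd, rJ, map_ofNat, -ofReal_cos, -ofReal_sin] <;> push_cast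
  · linear_combination (-(1 + I) / 4) * h
  · linear_combination (-(1 - I) / 4) * h

section tr
variable {n : Type*} [Fintype n] [DecidableEq n]

lemma idem_trace (p : Matrix n n ℂ) (h : p * p = p) :
    p.trace = (Module.finrank ℂ (LinearMap.range (Matrix.toLin' p)) : ℂ) := by
  have hp : IsIdempotentElem (Matrix.toLin' p) := by
    show Matrix.toLin' p * Matrix.toLin' p = _
    rw [Module.End.mul_eq_comp, ← Matrix.toLin'_mul, h]
  have := (LinearMap.IsIdempotentElem.isProj_range _ hp).trace
  rw [← this, Matrix.trace_toLin'_eq]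

lemma idem_zero (p : Matrix n n ℂ) (h : p * p = p) (ht : p.trace = 0) : p = 0 := by
  rw [idem_trace p h] at ht
  have h1 : Module.finrank ℂ (LinearMap.range (Matrix.toLin' p)) = 0 := by exact_mod_cast ht
  rw [Submodule.finrank_eq_zero, LinearMap.range_eq_bot] at h1
  simpa using h1

lemma idem_one (p : Matrix n n ℂ) (h : p * p = p) (ht : p.trace = 1) :
    ∃ e : n → ℂ, e ≠ 0 ∧ p.mulVec e = e ∧ ∀ y, p.mulVec y = y → ∃ c : ℂ, y = c • e := by
  rw [idem_trace p h] at ht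
  have h1 : Module.finrank ℂ (LinearMap.range (Matrix.toLin' p)) = 1 := by exact_mod_cast ht
  obtain ⟨⟨e, z, hz⟩, he, hall⟩ := finrank_eq_one_iff'.1 h1
  refine ⟨e, fun h0 => he (Subtype.ext h0), ?_, fun y hy => ?_⟩
  · rw [← hz, Matrix.toLin'_apply, Matrix.mulVec_mulVec, h]
  · obtain ⟨c, hc⟩ := hall ⟨y, y, by simpa using hy⟩
    exact ⟨c, by simpa using (congrArg Subtype.val hc).symm⟩

lemma idem4 {R : Type*} [Ring R] [Algebra ℂ R] (p P Q : R) (hp : p * p = p) (pP : p * P = P)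
    (Pp : P * p = P) (pQ : p * Q = Q) (Qp : Q * p = Q) (PP : P * P = p) (QQ : Q * Q = p)
    (PQ : Q * P = P * Q) (s t : ℂ) (hs : s * s = 1) (ht : t * t = 1) :
    ((1 / 4 : ℂ) • (p + s • P + t • Q + (s * t) • (P * Q))) *
    ((1 / 4 : ℂ) • (p + s • P + t • Q + (s * t) • (P * Q))) =
    ((1 / 4 : ℂ) • (p + s • P + t • Q + (s * t) • (P * Q))) := by
  have aux : ∀ (X : R) (u : ℂ), p * X = X → X * p = X → X * X = p → u * u = 1 →
      ((1 / 2 : ℂ) • (p + u • X)) * ((1 / 2 : ℂ) • (p + u • X)) = (1 / 2 : ℂ) • (p + u • X) := by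
    intro X u h1 h2 h3 hu
    simp only [smul_mul_smul_comm, mul_add, add_mul, mul_smul_comm, smul_mul_assoc, h1, h2, h3, hp, smul_smul]
    match_scalars
    · linear_combination (1 / 4) * hu
    · ring
  have e : (1 / 4 : ℂ) • (p + s • P + t • Q + (s * t) • (P * Q)) =
      ((1 / 2 : ℂ) • (p + s • P)) * ((1 / 2 : ℂ) • (p + t • Q)) := by
    simp only [smul_mul_smul_comm, mul_add, add_mul, mul_smul_comm, smul_mul_assoc, Pp, pQ, hp, smul_smul]
    module
  have cm : ((1 / 2 : ℂ) • (p + s • P)) * ((1 / 2 : ℂ) • (p + t • Q)) =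
      ((1 / 2 : ℂ) • (p + t • Q)) * ((1 / 2 : ℂ) • (p + s • P)) := by
    simp only [smul_mul_smul_comm, mul_add, add_mul, mul_smul_comm, smul_mul_assoc, Pp, pQ, pP, Qp, hp, smul_smul, PQ]
    module
  rw [e]
  calc _ = ((1 / 2 : ℂ) • (p + s • P)) * (((1 / 2 : ℂ) • (p + t • Q)) * ((1 / 2 : ℂ) • (p + s • P))) *
        ((1 / 2 : ℂ) • (p + t • Q)) := by simp only [mul_assoc]
    _ = (((1 / 2 : ℂ) • (p + s • P)) * ((1 / 2 : ℂ) • (p + s • P))) *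
        (((1 / 2 : ℂ) • (p + t • Q)) * ((1 / 2 : ℂ) • (p + t • Q))) := by
          rw [← cm]; simp only [mul_assoc]
    _ = _ := by rw [aux P s pP Pp PP hs, aux Q t pQ Qp QQ ht]

lemma trace_lemma (ρ : SU2 → Matrix n n ℂ) (hm : ∀ g h, ρ (g * h) = ρ g * ρ h) (hn : ρ nn = ρ 1)
    (m : ℕ) (htr : (ρ 1).trace = m) (hm3 : m ≤ 3) :
    ρ ii = ρ 1 ∨ (m = 3 ∧ (ρ ii).trace = -1 ∧ ρ 1 + ρ ii + ρ jj + ρ ii * ρ jj = 0) := by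
  have tc : ∀ a b, (ρ (a * b)).trace = (ρ (b * a)).trace := fun a b => by
    rw [hm, hm, Matrix.trace_mul_comm]
  have tJ : (ρ jj).trace = (ρ ii).trace := by
    have : jj = (cc * ii) * cc⁻¹ := by rw [cc_dd, mul_inv_cancel_right]
    rw [this, tc, inv_mul_cancel_left]
  have tK : (ρ ii * ρ jj).trace = (ρ ii).trace := by
    rw [← hm, ii_jj]
    have : rK (Real.pi / 2) = (cc * jj) * cc⁻¹ := by rw [cc_rJ, mul_inv_cancel_right]
    rw [this, tc, inv_mul_cancel_left, tJ]
  have id := idem4 (ρ 1) (ρ ii) (ρ jj) (by rw [← hm, one_mul]) (by rw [← hm, one_mul])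
    (by rw [← hm, mul_one]) (by rw [← hm, one_mul]) (by rw [← hm, mul_one])
    (by rw [← hm, ii_ii, hn]) (by rw [← hm, jj_jj, hn])
    (by rw [← hm, jj_ii, hm, hn, ← hm, one_mul, hm])
  set P := ρ ii
  set Q := ρ jj
  set p := ρ 1
  have i1 := id 1 1 (by norm_num) (by norm_num)
  have i2 := id (-1) 1 (by norm_num) (by norm_num)
  have i3 := id (-1) (-1) (by norm_num) (by norm_num)
  obtain ⟨k1, t1⟩ : ∃ k : ℕ, Matrix.trace _ = (k : ℂ) := ⟨_, idem_trace _ i1⟩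
  obtain ⟨k2, t2⟩ : ∃ k : ℕ, Matrix.trace _ = (k : ℂ) := ⟨_, idem_trace _ i2⟩
  have z1 := idem_zero _ i1
  have z2 := idem_zero _ i2
  have z3 := idem_zero _ i3
  simp only [Matrix.trace_smul, Matrix.trace_add, tJ, tK, htr, smul_eq_mul] at t1 t2 z1 z2 z3
  have e : (k1 : ℂ) + 3 * k2 = m := by linear_combination (-1) * t1 - 3 * t2
  have e' : k1 + 3 * k2 = m := by exact_mod_cast e
  have : k2 = 0 ∨ (k2 = 1 ∧ k1 = 0 ∧ m = 3) := by omega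
  rcases this with h | ⟨h, h', h''⟩
  · left
    subst h
    have y2 := z2 (by rw [t2]; simp)
    have y3 := z3 (by linear_combination t2)
    have : p - P = (2:ℂ) • ((1 / 4 : ℂ) • (p + (-1 : ℂ) • P + (1:ℂ) • Q + (-1 * 1 : ℂ) • (P * Q)) +
      (1 / 4 : ℂ) • (p + (-1 : ℂ) • P + (-1:ℂ) • Q + (-1 * -1 : ℂ) • (P * Q))) := by module
    rw [y2, y3] at this
    simp only [add_zero, smul_zero] at this
    exact (sub_eq_zero.1 this).symm
  · right
    subst h h' h''
    refine ⟨rfl, by linear_combination (-4) * t2, ?_⟩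
    have y1 := z1 (by rw [t1]; simp)
    have : p + P + Q + P * Q = (4:ℂ) • ((1 / 4 : ℂ) • (p + (1 : ℂ) • P + (1:ℂ) • Q + (1 * 1 : ℂ) • (P * Q))) := by
      module
    rw [this, y1, smul_zero]
end tr
end
end S17

namespace S17
noncomputable section
open Complex ComplexConjugate

/-- the representation as a monoid homomorphism -/
def rep {n : ℕ} (w : SU2 → Fin n → Fin n → ℂ) (hw : RepData w) : SU2 →* Matrix (Fin n) (Fin n) ℂ where
  toFun k := Matrix.of (fun i j => w k i j)
  map_one' := by
    ext i j
    simp [hw.1, Matrix.one_apply]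
  map_mul' a b := by
    ext i j
    simp [hw.2.1, Matrix.mul_apply]

section
variable {n : ℕ} {w : SU2 → Fin n → Fin n → ℂ} (hw : RepData w)

lemma rep_apply (k : SU2) (i j : Fin n) : rep w hw k i j = w k i j := rfl

lemma rep_star_mul (k : SU2) : star (rep w hw k) * rep w hw k = 1 := by
  ext i j
  simpa [Matrix.mul_apply, Matrix.one_apply, rep_apply, Matrix.star_apply] using hw.2.2.2.1 k i j

lemma rep_mul_star (k : SU2) : rep w hw k * star (rep w hw k) = 1 := by
  ext i j
  simpa [Matrix.mul_apply, Matrix.one_apply, rep_apply, Matrix.star_apply] using hw.2.2.1 k i j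

lemma rep_schur (hi : IsIrr w) (A : Matrix (Fin n) (Fin n) ℂ) (h : ∀ k, A * rep w hw k = rep w hw k * A) :
    ∃ c : ℂ, A = c • 1 := by
  obtain ⟨c, hc⟩ := hi A (fun k i j => by
    have := congrFun (congrFun (h k) i) j
    simpa [Matrix.mul_apply, rep_apply] using this)
  refine ⟨c, ?_⟩
  ext i j
  simp [hc, Matrix.one_apply]

lemma rep_bound {n : ℕ} {w : SU2 → Fin n → Fin n → ℂ} (hw : RepData w) (k : SU2) (i j : Fin n) : ‖w k i j‖ ≤ 1 := by
  have h := hw.2.2.1 k i i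
  simp only [if_true] at h
  have h2 : ∑ l, ‖w k i l‖ ^ 2 = 1 := by
    have : ((∑ l, ‖w k i l‖ ^ 2 : ℝ) : ℂ) = 1 := by
      rw [← h]
      push_cast
      exact Finset.sum_congr rfl fun l _ => by
        rw [Complex.star_def, Complex.mul_conj, Complex.normSq_eq_norm_sq]; push_cast; rfl
    exact_mod_cast this
  have h3 : ‖w k i j‖ ^ 2 ≤ 1 := by
    rw [← h2]
    exact Finset.single_le_sum (f := fun l => ‖w k i l‖ ^ 2) (fun l _ => by positivity) (Finset.mem_univ j)
  nlinarith [norm_nonneg (w k i j)]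

lemma rep_cont : Continuous (rep w hw) :=
  continuous_matrix fun i j => hw.2.2.2.2 i j

lemma rep_nontriv (hi : IsIrr w) (hn : 2 ≤ n) : rep w hw ii ≠ 1 := by
  intro h
  have ht := triv_of_ii (rep w hw) (map_mul _) (by rw [h, map_one])
  obtain ⟨m, rfl⟩ : ∃ m, n = m + 2 := ⟨n - 2, by omega⟩
  obtain ⟨c, hc⟩ := rep_schur hw hi (Matrix.single 0 0 1) (fun k => by rw [ht, map_one]; simp)
  have h0 := congrFun (congrFun hc 0) 0
  have h1 := congrFun (congrFun hc 1) 1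
  simp at h0 h1
  rw [← h1] at h0
  exact one_ne_zero h0

lemma rep_nn (hi : IsIrr w) : ∃ c : ℂ, rep w hw nn = c • 1 := by
  apply rep_schur hw hi
  intro k
  rw [← map_mul, ← map_mul, nn_comm]

attribute [local instance] Matrix.linftyOpNormedRing Matrix.linftyOpNormedAlgebra in
lemma lieM : ∃ A : Matrix (Fin n) (Fin n) ℂ,
    (∀ s, rep w hw (dd s) * A = A * rep w hw (dd s)) ∧
    (rep w hw jj * A = -(A * rep w hw jj)) ∧
    (∀ φ, rep w hw (dd φ) * (rep w hw cc * A * rep w hw cc⁻¹) * rep w hw (dd (-φ)) =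
      Real.cos (2 * φ) • (rep w hw cc * A * rep w hw cc⁻¹) +
      Real.sin (2 * φ) • (rep w hw cc * (rep w hw cc * A * rep w hw cc⁻¹) * rep w hw cc⁻¹)) ∧
    (A * (rep w hw cc * A * rep w hw cc⁻¹) - (rep w hw cc * A * rep w hw cc⁻¹) * A =
      (2 : ℝ) • (rep w hw cc * (rep w hw cc * A * rep w hw cc⁻¹) * rep w hw cc⁻¹)) ∧
    (∀ (X Y : Matrix (Fin n) (Fin n) ℂ) (c : ℝ), A * X = c • Y → A * Y = -(c • X) → ∀ t,
      rep w hw (dd t) * X = Real.cos (c * t) • X + Real.sin (c * t) • Y) ∧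
    (∀ (X : Matrix (Fin n) (Fin n) ℂ), (∀ t, rep w hw (dd t) * X = X) → A * X = 0) := by
  have hb : ∀ g, ‖rep w hw g‖ ≤ (n : ℝ) := by
    intro g
    have h0 : ‖rep w hw g‖₊ ≤ (n : NNReal) := by
      rw [Matrix.linfty_opNNNorm_def]
      refine Finset.sup_le fun i _ => ?_
      calc _ ≤ ∑ j : Fin n, (1 : NNReal) := Finset.sum_le_sum fun j _ => rep_bound hw g i j
        _ = n := by simp
    exact_mod_cast h0
  have : CompleteSpace (Matrix (Fin n) (Fin n) ℂ) := FiniteDimensional.complete ℂ _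
  obtain ⟨A, hA, hl⟩ := lie (rep w hw) (rep_cont hw) hb
  exact ⟨A, A_comm _ hA, A_anti _ hA, hl, bracket _ hA hl, fun X Y c h1 h2 t => fix_of_A _ hA h1 h2 t,
    fun X h => A_of_fix _ hA h⟩

end
end
end S17

namespace S17
noncomputable section
open Complex ComplexConjugate
open Matrix

lemma v_nn {v : SU2 → Fin 3 → Fin 3 → ℂ} (hv : RepData v) (hi : IsIrr v) : rep v hv nn = 1 := by
  obtain ⟨c, hc⟩ := rep_nn hv hi
  have h2 : c * c = 1 := by
    have : rep v hv nn * rep v hv nn = 1 := by rw [← map_mul, nn_nn, map_one]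
    rw [hc] at this
    have := congrFun (congrFun this 0) 0
    simpa using this
  have h3 : c ^ 3 = 1 := by
    have h := congrArg Matrix.det (congrArg (rep v hv) jj_ii)
    simp only [map_mul, hc, Matrix.det_mul, Matrix.det_smul, Fintype.card_fin, Matrix.det_one, mul_one] at h
    have hI : (rep v hv ii).det ≠ 0 := by
      intro h0
      have := congrArg Matrix.det (rep_mul_star hv ii)
      rw [Matrix.det_mul, h0] at this; simp at this
    have hJ : (rep v hv jj).det ≠ 0 := by
      intro h0
      have := congrArg Matrix.det (rep_mul_star hv jj)
      rw [Matrix.det_mul, h0] at this; simp at this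
    have hne := mul_ne_zero hI hJ
    apply mul_right_cancel₀ hne
    linear_combination -h
  have : c = 1 := by linear_combination h3 - c * h2
  rw [hc, this, one_smul]

lemma v_struct {v : SU2 → Fin 3 → Fin 3 → ℂ} (hv : RepData v) (hi : IsIrr v) :
    ∃ eI eJ eK : Fin 3 → ℂ, LinearIndependent ℂ ![eI, eJ, eK] ∧
      rep v hv cc *ᵥ eI = eJ ∧ rep v hv cc *ᵥ eJ = eK ∧ rep v hv cc *ᵥ eK = eI ∧
      ∀ t, rep v hv (dd t) *ᵥ eI = eI ∧
        rep v hv (dd t) *ᵥ eJ = Real.cos (2 * t) • eJ + Real.sin (2 * t) • eK ∧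
        rep v hv (dd t) *ᵥ eK = Real.cos (2 * t) • eK - Real.sin (2 * t) • eJ := by
  have hnn := v_nn hv hi
  have hnt := rep_nontriv hv hi (by norm_num)
  obtain ⟨B, Bcomm, Banti, -, Bbr, Bfix, B0⟩ := lieM hv
  set V := rep v hv with hV
  have am : ∀ g h (x : Fin 3 → ℂ), V g *ᵥ (V h *ᵥ x) = V (g * h) *ᵥ x := fun g h x => by
    rw [mulVec_mulVec, ← map_mul]
  rcases trace_lemma (fun g => V g) (map_mul V) (by simp [hnn]) 3 (by simp) le_rfl with h | ⟨-, htr, hsum⟩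
  · exact absurd (h.trans (map_one V)) hnt
  simp only [map_one] at hsum
  have PP : V ii * V ii = 1 := by rw [← map_mul, ii_ii, hnn]
  have QP : V jj * V ii = V ii * V jj := by rw [← map_mul, jj_ii, map_mul, hnn, one_mul, map_mul]
  obtain ⟨e, e0, he, huniq⟩ := idem_one ((1 / 2 : ℂ) • (1 + V ii)) (by
      simp only [smul_mul_assoc, mul_smul_comm, add_mul, mul_add, one_mul, mul_one, PP]
      module) (by simp [htr]; norm_num)
  have Pe : V ii *ᵥ e = e := by
    rw [smul_mulVec, add_mulVec, one_mulVec] at he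
    have : V ii *ᵥ e = (2 : ℂ) • ((1 / 2 : ℂ) • (e + V ii *ᵥ e)) - e := by module
    rw [this, he]; module
  have Pu : ∀ y, V ii *ᵥ y = y → ∃ c : ℂ, y = c • e := by
    intro y hy
    apply huniq
    rw [smul_mulVec, add_mulVec, one_mulVec, hy]; module
  have Qe : V jj *ᵥ e = -e := by
    have h := congrArg (· *ᵥ e) hsum
    simp only [add_mulVec, one_mulVec, zero_mulVec, Pe] at h
    rw [← QP, ← mulVec_mulVec, Pe] at h
    have : V jj *ᵥ e = (1 / 2 : ℂ) • (e + e + V jj *ᵥ e + V jj *ᵥ e) - e := by module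
    rw [this, h]; simp
  have De : ∀ t, V (dd t) *ᵥ e = e := by
    have h1 : ∀ t, ∃ c : ℂ, V (dd t) *ᵥ e = c • e := by
      intro t
      apply Pu
      rw [am, ← dd_add, add_comm, dd_add, ← am, Pe]
    have h2 : ∀ t, V (dd t) *ᵥ e = V (dd (-t)) *ᵥ e := by
      intro t
      obtain ⟨c, hc⟩ := h1 t
      have h := am jj (dd t) e
      rw [jj_dd, ← am, hc, mulVec_smul, Qe, mulVec_neg, smul_neg, neg_inj] at h
      rw [hc, h]
    intro t
    have : dd t = dd (t / 2) * dd (t / 2) := by rw [← dd_add]; congr 1; ring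
    rw [this, ← am, h2 (t / 2)]
    rw [am, ← dd_add, add_neg_cancel, dd_zero, map_one, one_mulVec]
  obtain ⟨eJ, hJ⟩ : ∃ x, x = V cc *ᵥ e := ⟨_, rfl⟩
  obtain ⟨eK, hK⟩ : ∃ x, x = V cc *ᵥ eJ := ⟨_, rfl⟩
  have hI : V cc *ᵥ eK = e := by
    rw [hK, hJ, am, am, cc3, hnn, one_mulVec]
  have cinj : ∀ x y, V cc *ᵥ x = V cc *ᵥ y → x = y := by
    intro x y h
    have := congrArg (V cc⁻¹ *ᵥ ·) h
    simpa [am] using this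
  have PQ : ∀ x, V (rK (Real.pi / 2)) *ᵥ x = V ii *ᵥ (V jj *ᵥ x) := fun x => by rw [am, ii_jj]
  have RJ : ∀ t, V (rJ t) *ᵥ eJ = eJ := by
    intro t
    rw [hJ, am, ← cc_dd, ← am, De]
  have QJ : V jj *ᵥ eJ = eJ := RJ _
  have PJ : V ii *ᵥ eJ = -eJ := by
    rw [hJ, am, ← cc_rK, ← am, PQ, Qe, mulVec_neg, Pe, mulVec_neg]
  have PK : V ii *ᵥ eK = -eK := by
    rw [hK, am, ← cc_rK, ← am, PQ, QJ, PJ, mulVec_neg]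
  have QK : V jj *ᵥ eK = -eK := by
    rw [hK, am, ← cc_dd, ← am, PJ, mulVec_neg]
  have DJ : V (dd (Real.pi / 4)) *ᵥ eJ = eK := by
    rw [hK, cc_eq, ← am, RJ]
  have DK : V (dd (Real.pi / 4)) *ᵥ eK = -eJ := by
    rw [← DJ, am, ← dd_add, ← PJ]; congr 3; ring
  have BA : ∀ s x, V (dd s) *ᵥ (B *ᵥ x) = B *ᵥ (V (dd s) *ᵥ x) := fun s x => by
    rw [mulVec_mulVec, Bcomm, mulVec_mulVec]
  obtain ⟨l, hl⟩ : ∃ l : ℂ, B *ᵥ eJ = l • eK := by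
    have h1 : V ii *ᵥ (B *ᵥ eJ) = -(B *ᵥ eJ) := by rw [BA, PJ, mulVec_neg]
    have h2 : V jj *ᵥ (B *ᵥ eJ) = -(B *ᵥ eJ) := by
      rw [mulVec_mulVec, Banti, neg_mulVec, ← mulVec_mulVec, QJ]
    obtain ⟨l, hl⟩ := Pu (V cc *ᵥ (B *ᵥ eJ)) (by
      rw [am, ← cc_rK, ← am, PQ, h2, mulVec_neg, h1, neg_neg])
    refine ⟨l, cinj _ _ ?_⟩
    rw [hl, mulVec_smul, hI]
  have hBK : B *ᵥ eK = -(l • eJ) := by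
    rw [← DJ, ← BA, hl, mulVec_smul, DK, smul_neg]
  have hBe : B *ᵥ e = 0 := by
    have := B0 (Matrix.replicateCol (Fin 3) e) (fun t => by rw [← replicateCol_mulVec, De])
    rw [← replicateCol_mulVec] at this
    exact Matrix.replicateCol_injective (this.trans (Matrix.replicateCol_zero).symm)
  have cci : ∀ x, V cc⁻¹ *ᵥ (V cc *ᵥ x) = x := fun x => by rw [am]; simp
  have eJ0 : eJ ≠ 0 := by
    intro h
    apply e0
    apply cinj
    rw [← hJ, h, mulVec_zero]
  have eK0 : eK ≠ 0 := by
    intro h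
    apply eJ0
    apply cinj
    rw [← hK, h, mulVec_zero]
  have hll : l * l = 2 * l := by
    have h := congrArg (· *ᵥ eJ) Bbr
    simp only [sub_mulVec, ← mulVec_mulVec, smul_mulVec] at h
    have c1 : V cc⁻¹ *ᵥ eJ = e := by rw [hJ, cci]
    have c2 : V cc⁻¹ *ᵥ eK = eJ := by rw [hK, cci]
    have c3 : V cc⁻¹ *ᵥ e = eK := by rw [← hI, cci]
    rw [c1, c3, hBK, hBe, hl] at h
    simp only [mulVec_smul, mulVec_neg, mulVec_zero, c2, hl, hI, ← hK] at h
    have h' : (l * l - 2 * l) • e = 0 := by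
      have : (2 : ℝ) • -(l • e) = (2 : ℂ) • -(l • e) := by
        rw [← Complex.coe_smul]; norm_num
      rw [this] at h
      have : (l * l - 2 * l) • e = -(0 - l • l • e) + (2 : ℂ) • -(l • e) := by module
      rw [this, ← h]; module
    rcases smul_eq_zero.1 h' with h | h
    · linear_combination h
    · exact absurd h e0
  have hl2 : l = 2 := by
    rcases eq_or_ne l 0 with h | h
    · exfalso
      have := Bfix (Matrix.replicateCol (Fin 3) eJ) 0 0 (by
        rw [← replicateCol_mulVec, hl, h, zero_smul, Matrix.replicateCol_zero, smul_zero]) (by simp) (Real.pi / 2)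
      simp only [zero_mul, Real.cos_zero, one_smul, smul_zero, add_zero] at this
      rw [← replicateCol_mulVec, PJ] at this
      have := Matrix.replicateCol_injective this
      apply eJ0
      have h2 : eJ = (1 / 2 : ℂ) • (eJ - -eJ) := by module
      rw [h2, this]; simp
    · exact mul_right_cancel₀ h hll
  subst hl2
  have two : ∀ x : Fin 3 → ℂ, (2 : ℂ) • x = (2 : ℝ) • x := fun x => by
    rw [← Complex.coe_smul]; norm_num
  rw [two] at hl hBK
  have fJ : ∀ t, V (dd t) *ᵥ eJ = Real.cos (2 * t) • eJ + Real.sin (2 * t) • eK := by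
    intro t
    have := Bfix (Matrix.replicateCol (Fin 3) eJ) (Matrix.replicateCol (Fin 3) eK) 2 (by
      rw [← replicateCol_mulVec, hl, Matrix.replicateCol_smul]) (by
      rw [← replicateCol_mulVec, hBK, ← Matrix.replicateCol_smul]; rfl) t
    rw [← replicateCol_mulVec, ← Matrix.replicateCol_smul, ← Matrix.replicateCol_smul,
      ← Matrix.replicateCol_add] at this
    exact Matrix.replicateCol_injective this
  refine ⟨e, eJ, eK, ?_, hJ.symm, hK.symm, hI, fun t => ⟨De t, fJ t, ?_⟩⟩
  · rw [Fintype.linearIndependent_iff]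
    intro g hg
    simp only [Fin.sum_univ_three, Matrix.cons_val_zero, Matrix.cons_val_one, Matrix.cons_val] at hg
    have h1 := congrArg (V ii *ᵥ ·) hg
    have h2 := congrArg (V jj *ᵥ ·) hg
    simp only [mulVec_add, mulVec_smul, Pe, PJ, PK, Qe, QJ, QK, mulVec_zero] at h1 h2
    have z0 : g 0 • e = 0 := by
      have : g 0 • e = (1 / 2 : ℂ) • ((g 0 • e + g 1 • eJ + g 2 • eK) + (g 0 • e + g 1 • -eJ + g 2 • -eK)) := by
        module
      rw [this, hg, h1]; simp
    have z1 : g 1 • eJ = 0 := by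
      have : g 1 • eJ = (1 / 2 : ℂ) • ((g 0 • e + g 1 • eJ + g 2 • eK) + (g 0 • -e + g 1 • eJ + g 2 • -eK)) := by
        module
      rw [this, hg, h2]; simp
    have z2 : g 2 • eK = 0 := by
      rw [z0, z1] at hg; simpa using hg
    intro i
    fin_cases i
    · exact (smul_eq_zero.1 z0).resolve_right e0
    · exact (smul_eq_zero.1 z1).resolve_right eJ0
    · exact (smul_eq_zero.1 z2).resolve_right eK0
  · rw [← DJ, am, ← dd_add, add_comm, dd_add, ← am, fJ, mulVec_add, mulVec_smul, mulVec_smul, DK, DJ, smul_neg,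
      sub_eq_add_neg]
end
end S17

namespace S17
noncomputable section
open Complex ComplexConjugate
open Matrix

lemma rep_inv {n : ℕ} {w : SU2 → Fin n → Fin n → ℂ} (hw : RepData w) (k : SU2) :
    rep w hw k⁻¹ = star (rep w hw k) := by
  calc rep w hw k⁻¹ = star (rep w hw k) * rep w hw k * rep w hw k⁻¹ := by rw [rep_star_mul, one_mul]
    _ = _ := by rw [mul_assoc, ← map_mul, mul_inv_cancel, map_one, mul_one]

lemma w_struct {n : ℕ} {w : SU2 → Fin n → Fin n → ℂ} (hw : RepData w) (hi : IsIrr w) (hn : 2 ≤ n) :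
    ∃ A : Fin 3 → Matrix (Fin n) (Fin n) ℂ, A 0 ≠ 0 ∧
      rep w hw cc * A 0 * rep w hw cc⁻¹ = A 1 ∧ rep w hw cc * A 1 * rep w hw cc⁻¹ = A 2 ∧
      rep w hw cc * A 2 * rep w hw cc⁻¹ = A 0 ∧
      ∀ t, rep w hw (dd t) * A 0 * rep w hw (dd t)⁻¹ = A 0 ∧
        rep w hw (dd t) * A 1 * rep w hw (dd t)⁻¹ = Real.cos (2 * t) • A 1 + Real.sin (2 * t) • A 2 ∧
        rep w hw (dd t) * A 2 * rep w hw (dd t)⁻¹ = Real.cos (2 * t) • A 2 - Real.sin (2 * t) • A 1 := by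
  have hnt := rep_nontriv hw hi hn
  obtain ⟨c, hc⟩ := rep_nn hw hi
  obtain ⟨A, Acomm, -, Af, -, Afix, -⟩ := lieM hw
  set W := rep w hw with hW
  have di : ∀ t, (dd t)⁻¹ = dd (-t) := fun t => by
    rw [inv_eq_iff_mul_eq_one, ← dd_add, add_neg_cancel, dd_zero]
  obtain ⟨B, hB⟩ : ∃ B, B = W cc * A * W cc⁻¹ := ⟨_, rfl⟩
  obtain ⟨C, hC⟩ : ∃ C, C = W cc * B * W cc⁻¹ := ⟨_, rfl⟩
  have adm : ∀ g h X, W g * (W h * X * W h⁻¹) * W g⁻¹ = W (g * h) * X * W (g * h)⁻¹ := fun g h X => by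
    rw [_root_.mul_inv_rev, map_mul, map_mul]; simp only [mul_assoc]
  rw [← hB, ← hC] at Af
  have fB : ∀ t, W (dd t) * B * W (dd t)⁻¹ = Real.cos (2 * t) • B + Real.sin (2 * t) • C := fun t => by
    rw [di]; exact Af t
  have dB : W (dd (Real.pi / 4)) * B * W (dd (Real.pi / 4))⁻¹ = C := by
    rw [fB, show 2 * (Real.pi / 4) = Real.pi / 2 by ring]; simp
  have dC : W (dd (Real.pi / 4)) * C * W (dd (Real.pi / 4))⁻¹ = -B := by
    rw [← dB, adm, ← dd_add, fB, show 2 * (Real.pi / 4 + Real.pi / 4) = Real.pi by ring]; simp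
  refine ⟨![A, B, C], ?_, hB.symm, hC.symm, ?_, fun t => ⟨?_, fB t, ?_⟩⟩
  · intro h
    simp only [Matrix.cons_val_zero] at h
    have := Afix 1 0 0 (by simp [h]) (by simp) (Real.pi / 2)
    apply hnt
    simpa using this
  · show W cc * C * W cc⁻¹ = A
    rw [hC, hB, adm, adm, cc3]
    have : A * W nn = W nn * A := by rw [hc]; simp
    rw [← this, mul_assoc, ← map_mul]; simp
  · show W (dd t) * A * W (dd t)⁻¹ = A
    rw [Acomm, mul_assoc, ← map_mul]; simp
  · show W (dd t) * C * W (dd t)⁻¹ = Real.cos (2 * t) • C - Real.sin (2 * t) • B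
    have : dd t * dd (Real.pi / 4) = dd (Real.pi / 4) * dd t := by rw [← dd_add, ← dd_add, add_comm]
    nth_rw 1 [← dB]
    rw [adm, this, ← adm, fB, mul_add, add_mul, mul_smul_comm, mul_smul_comm, smul_mul_assoc, smul_mul_assoc, dB, dC,
      smul_neg, sub_eq_add_neg]

lemma exists_c {n : ℕ} {w : SU2 → Fin n → Fin n → ℂ} (hw : RepData w) (hi : IsIrr w) (hn : 2 ≤ n)
    {v : SU2 → Fin 3 → Fin 3 → ℂ} (hv : RepData v) (hvi : IsIrr v) :
    ∃ c : Fin 3 → Matrix (Fin n) (Fin n) ℂ, c ≠ 0 ∧ ∀ k j,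
      rep w hw k * c j * star (rep w hw k) = ∑ i, v k i j • c i := by
  obtain ⟨eI, eJ, eK, hli, v1, v2, v3, vd⟩ := v_struct hv hvi
  obtain ⟨A, A0, w1, w2, w3, wd⟩ := w_struct hw hi hn
  let b := basisOfLinearIndependentOfCardEqFinrank hli (by simp)
  have hb : ∀ i, b i = ![eI, eJ, eK] i := fun i => by simp [b]
  obtain ⟨T, hT⟩ : ∃ T : (Fin 3 → ℂ) →ₗ[ℂ] Matrix (Fin n) (Fin n) ℂ, ∀ i, T (b i) = A i :=
    ⟨b.constr ℂ A, fun i => b.constr_basis ℂ A i⟩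
  have T0 : T eI = A 0 := by rw [← hT 0, hb]; rfl
  have T1 : T eJ = A 1 := by rw [← hT 1, hb]; rfl
  have T2 : T eK = A 2 := by rw [← hT 2, hb]; rfl
  have Tr : ∀ (x : ℝ) (y : Fin 3 → ℂ), T (x • y) = x • T y := fun x y => by
    rw [← Complex.coe_smul, map_smul, Complex.coe_smul]
  have onb : ∀ g, (∀ i, T (rep v hv g *ᵥ b i) = rep w hw g * T (b i) * rep w hw g⁻¹) →
      ∀ x, T (rep v hv g *ᵥ x) = rep w hw g * T x * rep w hw g⁻¹ := by
    intro g h x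
    have := b.ext (f₁ := T ∘ₗ Matrix.mulVecLin (rep v hv g))
      (f₂ := (LinearMap.mulRight ℂ (rep w hw g⁻¹)) ∘ₗ (LinearMap.mulLeft ℂ (rep w hw g)) ∘ₗ T)
      (fun i => by simpa using h i)
    simpa using LinearMap.congr_fun this x
  have eqv : ∀ g x, T (rep v hv g *ᵥ x) = rep w hw g * T x * rep w hw g⁻¹ := by
    intro g
    apply gen (fun g => ∀ x, T (rep v hv g *ᵥ x) = rep w hw g * T x * rep w hw g⁻¹)
    · intro a b ha hb x
      rw [map_mul, ← mulVec_mulVec, ha, hb, _root_.mul_inv_rev, map_mul, map_mul]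
      simp only [mul_assoc]
    · intro t
      apply onb
      obtain ⟨a1, a2, a3⟩ := vd t
      obtain ⟨b1, b2, b3⟩ := wd t
      intro i
      rw [hb]
      fin_cases i
      · show T (_ *ᵥ eI) = _ * T eI * _
        rw [a1, T0, b1]
      · show T (_ *ᵥ eJ) = _ * T eJ * _
        rw [a2, T1, b2, map_add, Tr, Tr, T1, T2]
      · show T (_ *ᵥ eK) = _ * T eK * _
        rw [a3, T2, b3, map_sub, Tr, Tr, T1, T2]
    · apply onb
      intro i
      rw [hb]
      fin_cases i
      · show T (_ *ᵥ eI) = _ * T eI * _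
        rw [v1, T0, w1, T1]
      · show T (_ *ᵥ eJ) = _ * T eJ * _
        rw [v2, T1, w2, T2]
      · show T (_ *ᵥ eK) = _ * T eK * _
        rw [v3, T2, w3, T0]
  refine ⟨fun j => T (Pi.single j 1), ?_, fun k j => ?_⟩
  · intro h
    apply A0
    have e : eI = ∑ i, eI i • (Pi.single i 1 : Fin 3 → ℂ) := by
      ext i
      simp [Finset.sum_apply, Pi.single_apply]
    rw [← T0, e, map_sum]
    refine Finset.sum_eq_zero fun i _ => ?_
    have h' : T (Pi.single i 1) = 0 := congrFun h i
    rw [map_smul, h', smul_zero]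
  · rw [← rep_inv, ← eqv]
    have : rep v hv k *ᵥ Pi.single j 1 = ∑ i, v k i j • (Pi.single i 1 : Fin 3 → ℂ) := by
      ext i
      simp [Finset.sum_apply, Pi.single_apply, rep_apply]
    rw [this, map_sum]
    simp
end
end S17

namespace S17
noncomputable section
open Complex ComplexConjugate
open Matrix

lemma nn_inv : nn⁻¹ = nn := by rw [inv_eq_iff_mul_eq_one, nn_nn]

lemma main_abs {r : ℕ} {ι : Type*} [Fintype ι] [DecidableEq ι] (hcard : Fintype.card ι = 3 * (r + 1))
    (W : SU2 →* Matrix (Fin (r + 1)) (Fin (r + 1)) ℂ) (U : SU2 →* Matrix ι ι ℂ)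
    (N : Matrix (Fin (r + 1)) (Fin (r + 1)) ℂ →ₗ[ℂ] Matrix ι ι ℂ)
    (hN : ∀ f g, N (f * g) = N f * N g)
    (hU : ∀ k f, N (W k * f * W k⁻¹) = U k * N f * U k⁻¹)
    (ω : ℂ) (hWn : W nn = ω • 1) (hUn : U nn = ω • 1)
    (C : Matrix ι (Fin (r + 1)) ℂ) (hC0 : C ≠ 0) (hNC : ∀ f, N f * C = C * f)
    (hUC : ∀ k, U k * C = C * W k) (k : SU2) : U k * N 1 = N (W k) := by
  have Wi : ∀ k, W k * W k⁻¹ = 1 := fun k => by rw [← map_mul, mul_inv_cancel, map_one]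
  have Wi' : ∀ k, W k⁻¹ * W k = 1 := fun k => by rw [← map_mul, inv_mul_cancel, map_one]
  have UN : ∀ k f, U k * N f = N (W k * f * W k⁻¹) * U k := fun k f => by
    rw [hU, mul_assoc, ← map_mul U, inv_mul_cancel, map_one, mul_one]
  obtain ⟨M, hM⟩ : ∃ M : SU2 → Matrix ι ι ℂ, ∀ k, M k = N (W k⁻¹) * U k := ⟨_, fun k => rfl⟩
  have M1 : M 1 = N 1 := by rw [hM]; simp
  have Mm : ∀ k h, M (k * h) = M k * M h := by
    intro k h
    rw [hM, hM, hM, mul_assoc, ← mul_assoc (U k), UN, ← mul_assoc, ← mul_assoc, ← hN, mul_assoc, ← map_mul U,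
      ← mul_assoc (W k⁻¹), ← mul_assoc (W k⁻¹), Wi', one_mul, ← map_mul W, _root_.mul_inv_rev]
  have Mc : ∀ k f, M k * N f = N f * M k := by
    intro k f
    rw [hM, mul_assoc, UN, ← mul_assoc, ← hN, ← mul_assoc, ← mul_assoc, Wi', one_mul, hN, mul_assoc]
  have MN1 : ∀ k, M k * N 1 = M k := fun k => by rw [← M1, ← Mm, mul_one]
  have MC : ∀ k, M k * C = C := by
    intro k
    rw [hM, Matrix.mul_assoc, hUC, ← Matrix.mul_assoc, hNC, Matrix.mul_assoc, Wi', Matrix.mul_one]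
  obtain ⟨E, hE⟩ : ∃ E : Fin (r + 1) → Fin (r + 1) → Matrix (Fin (r + 1)) (Fin (r + 1)) ℂ,
    ∀ a b, E a b = Matrix.single a b 1 := ⟨_, fun _ _ => rfl⟩
  have Em : ∀ a b c, E a b * E b c = E a c := fun a b c => by simp [hE]
  have E1 : ∑ a, E a a = 1 := by
    simp only [hE]
    exact Matrix.sum_single_one
  obtain ⟨p, hp⟩ : ∃ p, p = N (E 0 0) := ⟨_, rfl⟩
  have pp : p * p = p := by rw [hp, ← hN, Em]
  have pN1 : N 1 * p = p := by rw [hp, ← hN, one_mul]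
  have N1 : N 1 = ∑ a, N (E a 0) * N (E 0 a) := by
    rw [← E1, map_sum]
    exact Finset.sum_congr rfl fun a _ => by rw [← hN, Em]
  have N1N1 : N 1 * N 1 = N 1 := by rw [← hN, one_mul]
  obtain ⟨m, hm⟩ : ∃ m : ℕ, p.trace = m := ⟨_, idem_trace p pp⟩
  have hm3 : m ≤ 3 := by
    have t := idem_trace _ N1N1
    have t2 : (N 1).trace = (((r + 1) * m : ℕ) : ℂ) := by
      rw [N1, Matrix.trace_sum]
      have : ∀ a ∈ Finset.univ, (N (E a 0) * N (E 0 a)).trace = (m : ℂ) := fun a _ => by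
        rw [Matrix.trace_mul_comm, ← hN, Em, ← hp, hm]
      rw [Finset.sum_congr rfl this]; simp
    have h3 : (r + 1) * m = Module.finrank ℂ (LinearMap.range (Matrix.toLin' (N 1))) := by
      exact_mod_cast t2.symm.trans t
    have h4 := Submodule.finrank_le (LinearMap.range (Matrix.toLin' (N 1)))
    rw [← h3, Module.finrank_fintype_fun_eq_card, hcard, mul_comm 3] at h4
    exact Nat.le_of_mul_le_mul_left h4 (Nat.succ_pos r)
  have w2 : ω * ω = 1 := by
    have : W nn * W nn = 1 := by rw [← map_mul, nn_nn, map_one]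
    rw [hWn] at this
    have := congrFun (congrFun this 0) 0
    simpa using this
  have rm : ∀ g h, M (g * h) * p = (M g * p) * (M h * p) := by
    intro g h
    have : p * M h = M h * p := by rw [hp, Mc]
    rw [Mm, mul_assoc, mul_assoc, ← mul_assoc p, this, mul_assoc (M h), pp]
  have key : M ii * p = M 1 * p := by
    rcases trace_lemma (fun k => M k * p) rm (by
      show M nn * p = M 1 * p
      rw [M1, hM, nn_inv, hWn, hUn, map_smul, smul_mul_smul_comm, w2, one_smul, mul_one]) m
      (by show (M 1 * p).trace = _; rw [M1, pN1, hm]) hm3 with h | ⟨-, -, h⟩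
    · exact h
    · exfalso
      apply hC0
      have pC : ∀ k, M k * p * (C * E 0 0) = C * E 0 0 := by
        intro k
        rw [Matrix.mul_assoc, ← Matrix.mul_assoc p, hp, hNC, Matrix.mul_assoc, Em, ← Matrix.mul_assoc, MC]
      have h' := congrArg (· * (C * E 0 0)) h
      simp only [Matrix.add_mul, Matrix.mul_assoc (M ii * p) (M jj * p), pC, Matrix.zero_mul] at h'
      have z : C * E 0 0 = 0 := by
        have : C * E 0 0 = (1 / 4 : ℂ) • (C * E 0 0 + C * E 0 0 + C * E 0 0 + C * E 0 0) := by module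
        rw [this, h', smul_zero]
      have za : ∀ a, C * E a a = 0 := by
        intro a
        rw [← Em a 0 a, ← Em a 0 0, ← Matrix.mul_assoc, ← Matrix.mul_assoc, ← hNC, Matrix.mul_assoc (N _), z,
          Matrix.mul_zero, Matrix.zero_mul]
      rw [← Matrix.mul_one C, ← E1, Matrix.mul_sum]
      exact Finset.sum_eq_zero fun a _ => za a
  have tr := triv_of_ii (fun k => M k * p) rm key k
  simp only [M1, pN1] at tr
  have Mk : M k = N 1 := by
    rw [← MN1, N1, Finset.mul_sum]
    refine Finset.sum_congr rfl fun a _ => ?_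
    have : N (E a 0) = N (E a 0) * p := by rw [hp, ← hN, Em]
    rw [← mul_assoc, Mc, this, mul_assoc (N (E a 0)), hp, ← Mc, ← hp, tr]
  rw [UN, mul_one, Wi]
  have := congrArg (N (W k) * ·) Mk
  simp only [hM] at this
  rw [← mul_assoc, ← hN, ← hN, Wi, mul_one] at this
  exact this
end
end S17

namespace S17
noncomputable section
open Complex ComplexConjugate
open Matrix
open scoped Kronecker ComplexOrder

lemma part2_abs {r : ℕ} {ι : Type*} [Fintype ι] [DecidableEq ι]
    (W : SU2 → Matrix (Fin (r + 1)) (Fin (r + 1)) ℂ) (U : SU2 → Matrix ι ι ℂ)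
    (N : Matrix (Fin (r + 1)) (Fin (r + 1)) ℂ →ₗ[ℂ] Matrix ι ι ℂ)
    (hN : ∀ f g, N (f * g) = N f * N g)
    (hU : ∀ k, U k * N 1 = N (W k))
    (X : Matrix ι (Fin (r + 1)) ℂ) (hX : N 1 * X = X) :
    ∃ D : Fin (r + 1) × Fin (r + 1) → Matrix ι (Fin (r + 1)) ℂ,
      (∀ d k, U k * D d = D d * W k) ∧ X = ∑ d, D d * Matrix.single d.1 d.2 (1 : ℂ) := by
  refine ⟨fun d => Matrix.of fun x c => (N (Matrix.single c d.1 1) * X) x d.2, ?_, ?_⟩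
  · rintro ⟨a, b⟩ k
    ext x c
    have h1 : U k * (N (Matrix.single c a 1) * X) = ∑ e, W k e c • (N (Matrix.single e a 1) * X) := by
      have : N (Matrix.single c a 1) = N 1 * N (Matrix.single c a 1) := by rw [← hN, one_mul]
      rw [this, ← Matrix.mul_assoc, ← Matrix.mul_assoc, hU, ← hN]
      have : W k * Matrix.single c a 1 = ∑ e, W k e c • Matrix.single e a (1 : ℂ) := by
        ext i j
        simp [Matrix.mul_apply, Matrix.single_apply, Matrix.sum_apply, ite_and]
      rw [this, map_sum, Matrix.sum_mul]
      simp only [map_smul, Matrix.smul_mul]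
    have h2 := congrFun (congrFun h1 x) b
    rw [Matrix.mul_apply] at h2
    rw [Matrix.mul_apply]
    simp only [Matrix.of_apply]
    rw [h2, Matrix.sum_apply, Matrix.mul_apply]
    refine Finset.sum_congr rfl fun e _ => ?_
    simp [mul_comm]
  · ext x b
    nth_rw 1 [← hX]
    rw [← Matrix.sum_single_one, map_sum, Matrix.sum_mul, Matrix.sum_apply, Matrix.sum_apply,
      Fintype.sum_prod_type]
    refine Finset.sum_congr rfl fun a _ => ?_
    have : ∀ y, ((Matrix.of fun x c => (N (Matrix.single c a 1) * X) x y) * Matrix.single a y (1 : ℂ)) x b =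
      if y = b then (N (Matrix.single a a 1) * X) x y else 0 := by
      intro y
      simp [Matrix.mul_apply, Matrix.single_apply, ite_and]
    simp only [this]
    simp

lemma trace_abs {r : ℕ} {ι : Type*} [Fintype ι] [DecidableEq ι] (hcard : Fintype.card ι = 3 * (r + 1))
    (N : Matrix (Fin (r + 1)) (Fin (r + 1)) ℂ →ₗ[ℂ] Matrix ι ι ℂ)
    (hN : ∀ f g, N (f * g) = N f * N g) (h1 : N 1 = 1) (f : Matrix (Fin (r + 1)) (Fin (r + 1)) ℂ) :
    (N f).trace = 3 * f.trace := by
  obtain ⟨t, h00⟩ : ∃ t, (N (Matrix.single 0 0 1)).trace = t := ⟨_, rfl⟩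
  have ht : ∀ a b : Fin (r + 1), (N (Matrix.single a b 1)).trace = if a = b then t else 0 := by
    intro a b
    have : Matrix.single a b (1 : ℂ) = Matrix.single a 0 1 * Matrix.single (0 : Fin (r + 1)) b 1 := by simp
    rw [this, hN, Matrix.trace_mul_comm, ← hN]
    split_ifs with h
    · subst h; simpa using h00
    · rw [Matrix.single_mul_single_of_ne _ _ _ _ (Ne.symm h)]; simp
  have hf : ∀ f : Matrix (Fin (r + 1)) (Fin (r + 1)) ℂ, (N f).trace = t * f.trace := by
    intro f
    have e : f = ∑ a, ∑ b, f a b • Matrix.single a b (1 : ℂ) := by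
      conv_lhs => rw [Matrix.matrix_eq_sum_single f]
      simp [Matrix.smul_single]
    conv_lhs => rw [e]
    simp only [map_sum, map_smul, Matrix.trace_sum, Matrix.trace_smul, ht, smul_eq_mul]
    simp only [mul_ite, mul_zero, Finset.sum_ite_eq, Finset.mem_univ, if_true]
    rw [← Finset.sum_mul, mul_comm]
    rfl
  have h3 := hf 1
  rw [h1, Matrix.trace_one, Matrix.trace_one, hcard, Fintype.card_fin] at h3
  push_cast at h3
  have h4 : t = 3 := by
    have : ((r : ℂ) + 1) ≠ 0 := by exact_mod_cast Nat.succ_ne_zero r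
    exact (mul_right_cancel₀ this h3).symm
  rw [hf, h4]

lemma one_of_trace (u : Matrix (Fin 3) (Fin 3) ℂ) (hu : u * star u = 1) (ht : u.trace = 3) : u = 1 := by
  have h : ((u - 1) * (u - 1)ᴴ).trace = 0 := by
    rw [Matrix.conjTranspose_sub, Matrix.conjTranspose_one, ← Matrix.star_eq_conjTranspose, sub_mul, mul_sub, hu,
      mul_one, one_mul, Matrix.trace_sub, Matrix.trace_sub, Matrix.trace_sub, Matrix.star_eq_conjTranspose,
      Matrix.trace_conjTranspose, ht]
    simp
  rw [Matrix.trace_mul_conjTranspose_self_eq_zero_iff] at h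
  exact sub_eq_zero.1 h

lemma dd_pow (t : ℝ) (n : ℕ) : dd t ^ n = dd (n * t) := by
  induction n with
  | zero => simp [dd_zero]
  | succ n ih => rw [pow_succ, ih, ← dd_add]; congr 1; push_cast; ring

lemma exists_n {n : ℕ} {w : SU2 → Fin (n + 1) → Fin (n + 1) → ℂ} (hw : RepData w) :
    ∃ m : ℕ, 0 < m ∧ (rep w hw (dd (Real.pi / 2 / m))).trace ≠ 0 := by
  have hc : Continuous fun t : ℝ => (rep w hw (dd t)).trace :=
    ((rep_cont hw).comp dd_cont).matrix_trace
  have h0 : Filter.Tendsto (fun m : ℕ => Real.pi / 2 / m) Filter.atTop (nhds 0) :=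
    tendsto_const_div_atTop_nhds_zero_nat _
  have h1 := (hc.tendsto 0).comp h0
  have h2 : (rep w hw (dd 0)).trace ≠ 0 := by
    rw [dd_zero, map_one, Matrix.trace_one, Fintype.card_fin]
    exact_mod_cast Nat.succ_ne_zero n
  have h3 := (h1.eventually_ne h2).and (Filter.eventually_gt_atTop 0)
  obtain ⟨m, hm, hm'⟩ := h3.exists
  exact ⟨m, hm', hm⟩

lemma part1_abs {n : ℕ} {w : SU2 → Fin (n + 1) → Fin (n + 1) → ℂ} (hw : RepData w)
    {v : SU2 → Fin 3 → Fin 3 → ℂ} (hv : RepData v) (hvi : IsIrr v)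
    (h : ∀ k, (rep v hv k).trace * (rep w hw k).trace = 3 * (rep w hw k).trace) : False := by
  obtain ⟨m, hm, ht⟩ := exists_n hw
  apply rep_nontriv hv hvi (by norm_num)
  have : ii = dd (Real.pi / 2 / m) ^ m := by
    rw [dd_pow]
    have : (m : ℝ) ≠ 0 := by exact_mod_cast hm.ne'
    field_simp
  rw [this, map_pow, one_of_trace _ (rep_mul_star hv _) (mul_right_cancel₀ ht (h _)), one_pow]

section blocks
variable {n : ℕ}

/-- block matrix -/
def blk (X : Fin 3 → Fin 3 → Matrix (Fin n) (Fin n) ℂ) : Matrix (Fin 3 × Fin n) (Fin 3 × Fin n) ℂ :=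
  Matrix.of fun x y => X x.1 y.1 x.2 y.2

/-- block column -/
def bcol (X : Fin 3 → Matrix (Fin n) (Fin n) ℂ) : Matrix (Fin 3 × Fin n) (Fin n) ℂ :=
  Matrix.of fun x y => X x.1 x.2 y

lemma blk_mul (X Y : Fin 3 → Fin 3 → Matrix (Fin n) (Fin n) ℂ) :
    blk X * blk Y = blk fun i j => ∑ l, X i l * Y l j := by
  ext ⟨i, a⟩ ⟨j, b⟩
  simp [blk, Matrix.mul_apply, Fintype.sum_prod_type, Matrix.sum_apply]

lemma blk_bcol (X : Fin 3 → Fin 3 → Matrix (Fin n) (Fin n) ℂ) (Y : Fin 3 → Matrix (Fin n) (Fin n) ℂ) :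
    blk X * bcol Y = bcol fun i => ∑ l, X i l * Y l := by
  ext ⟨i, a⟩ b
  simp [blk, bcol, Matrix.mul_apply, Fintype.sum_prod_type, Matrix.sum_apply]

lemma bcol_mul (Y : Fin 3 → Matrix (Fin n) (Fin n) ℂ) (f : Matrix (Fin n) (Fin n) ℂ) :
    bcol Y * f = bcol fun i => Y i * f := by
  ext ⟨i, a⟩ b
  simp [bcol, Matrix.mul_apply]

lemma bcol_inj {X Y : Fin 3 → Matrix (Fin n) (Fin n) ℂ} (h : bcol X = bcol Y) : X = Y := by
  funext i
  ext a b
  exact congrFun (congrFun h (i, a)) b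

lemma bcol_surj (D : Matrix (Fin 3 × Fin n) (Fin n) ℂ) : ∃ X : Fin 3 → Matrix (Fin n) (Fin n) ℂ, D = bcol X :=
  ⟨fun i => Matrix.of fun a b => D (i, a) b, rfl⟩

lemma kron_blk (P : Matrix (Fin 3) (Fin 3) ℂ) (Q : Matrix (Fin n) (Fin n) ℂ) :
    P ⊗ₖ Q = blk fun i j => P i j • Q := by
  ext ⟨i, a⟩ ⟨j, b⟩
  simp [blk, Matrix.kroneckerMap_apply]

/-- tensor product representation -/
def tens (V : SU2 →* Matrix (Fin 3) (Fin 3) ℂ) (W : SU2 →* Matrix (Fin n) (Fin n) ℂ) :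
    SU2 →* Matrix (Fin 3 × Fin n) (Fin 3 × Fin n) ℂ where
  toFun k := V k ⊗ₖ W k
  map_one' := by simp
  map_mul' a b := by rw [map_mul, map_mul, Matrix.mul_kronecker_mul]

lemma equiv_iff {V : Matrix (Fin 3) (Fin 3) ℂ} {W : Matrix (Fin n) (Fin n) ℂ} (hV : V * star V = 1)
    (hW : W * star W = 1) (c : Fin 3 → Matrix (Fin n) (Fin n) ℂ) :
    (V ⊗ₖ W * bcol (fun i => star (c i)) = bcol (fun i => star (c i)) * W) ↔
      ∀ j, W * c j * star W = ∑ i, V i j • c i := by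
  have hV' : star V * V = 1 := mul_eq_one_comm.1 hV
  have hW' : star W * W = 1 := mul_eq_one_comm.1 hW
  have o1 : ∀ i j, ∑ l, V i l * star (V j l) = if i = j then 1 else 0 := fun i j => by
    have := congrFun (congrFun hV i) j
    simpa [Matrix.mul_apply, Matrix.one_apply] using this
  have o2 : ∀ i j, ∑ l, star (V l i) * V l j = if i = j then 1 else 0 := fun i j => by
    have := congrFun (congrFun hV' i) j
    simpa [Matrix.mul_apply, Matrix.one_apply] using this
  rw [kron_blk, blk_bcol, bcol_mul]
  constructor
  · intro h j
    have h := bcol_inj h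
    have hi : ∀ i, ∑ l, V i l • W * star (c l) = star (c i) * W := fun i => congrFun h i
    have e : W * star (c j) = ∑ i, star (V i j) • (star (c i) * W) := by
      simp only [← hi, Finset.smul_sum, smul_mul_assoc, smul_smul]
      rw [Finset.sum_comm]
      simp only [← Finset.sum_smul, o2]
      simp
    have e2 := congrArg (· * star W) e
    simp only [Finset.sum_mul, smul_mul_assoc, mul_assoc, hW, mul_one] at e2
    have e3 := congrArg star e2
    simpa [star_sum, mul_assoc] using e3
  · intro h
    congr 1
    funext i
    have hj : ∀ j, W * star (c j) = ∑ i, star (V i j) • (star (c i) * W) := by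
      intro j
      have := congrArg (fun x => star x * W) (h j)
      simp only [star_mul, star_star, mul_assoc, hW', mul_one, star_sum, star_smul, Finset.sum_mul,
        smul_mul_assoc] at this
      exact this
    simp only [smul_mul_assoc, hj, Finset.smul_sum, smul_smul]
    rw [Finset.sum_comm]
    simp only [← Finset.sum_smul, o1]
    simp
end blocks
end
end S17

namespace S17
noncomputable section
open Complex ComplexConjugate
open Matrix
open scoped Kronecker

lemma from_struct {r : ℕ} (hr : 1 ≤ r)
    {w : SU2 → Fin (r + 1) → Fin (r + 1) → ℂ} (hw : RepData w) (hwi : IsIrr w)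
    (βr : SU2 → (Matrix (Fin (r + 1)) (Fin (r + 1)) ℂ ≃⋆ₐ[ℂ] Matrix (Fin (r + 1)) (Fin (r + 1)) ℂ))
    (hβr : ∀ (k : SU2) (f : Matrix (Fin (r + 1)) (Fin (r + 1)) ℂ),
      βr k f = rep w hw k * f * star (rep w hw k))
    {v : SU2 → Fin 3 → Fin 3 → ℂ} (hv : RepData v) (hvi : IsIrr v)
    (E : Fin 3 → Fin 3 → Matrix (Fin (r + 1)) (Fin (r + 1)) ℂ)
    (η : Matrix (Fin (r + 1)) (Fin (r + 1)) ℂ → Fin 3 → Fin 3 → Matrix (Fin (r + 1)) (Fin (r + 1)) ℂ)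
    (h : IsFullStructure βr v E η) :
    ∃ N : Matrix (Fin (r + 1)) (Fin (r + 1)) ℂ →ₗ[ℂ] Matrix (Fin 3 × Fin (r + 1)) (Fin 3 × Fin (r + 1)) ℂ,
      (∀ f g, N (f * g) = N f * N g) ∧ N 1 = blk E ∧
      ∀ k, (rep v hv k ⊗ₖ rep w hw k) * N 1 = N (rep w hw k) := by
  obtain ⟨-, -, -, -, h1, hmul, -, hlin, heq, hZ⟩ := h
  have h0 : ∀ i j, η 0 i j = 0 := by
    intro i j
    have := hlin 1 0 0 i j
    simpa using this
  obtain ⟨N, hNd⟩ : ∃ N : Matrix (Fin (r + 1)) (Fin (r + 1)) ℂ →ₗ[ℂ]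
      Matrix (Fin 3 × Fin (r + 1)) (Fin 3 × Fin (r + 1)) ℂ, ∀ f, N f = blk (η f) :=
    ⟨{ toFun := fun f => blk (η f)
       map_add' := fun f g => by
        ext ⟨i, a⟩ ⟨j, b⟩
        have := hlin 1 f g i j
        rw [one_smul, one_smul] at this
        simp [blk, this]
       map_smul' := fun c f => by
        ext ⟨i, a⟩ ⟨j, b⟩
        have := hlin c f 0 i j
        rw [add_zero, h0, add_zero] at this
        simp [blk, this] }, fun f => rfl⟩
  have hN : ∀ f g, N (f * g) = N f * N g := by
    intro f g
    rw [hNd, hNd, hNd, blk_mul]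
    congr 1
    funext i j
    rw [hmul]
  refine ⟨N, hN, ?_, ?_⟩
  · rw [hNd]; congr 1; funext i j; exact h1 i j
  obtain ⟨c, c0, hc⟩ := exists_c hw hwi (by omega) hv hvi
  obtain ⟨ω, hω⟩ := rep_nn hw hwi
  intro k
  refine main_abs (by simp) (rep w hw) (tens (rep v hv) (rep w hw)) N hN ?_ ω hω ?_
    (bcol fun i => star (c i)) ?_ ?_ ?_ k
  · intro k f
    have e1 : tens (rep v hv) (rep w hw) k = blk fun i j => v k i j • rep w hw k := kron_blk _ _
    have e2 : tens (rep v hv) (rep w hw) k⁻¹ = blk fun i j => star (v k j i) • star (rep w hw k) := by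
      have : tens (rep v hv) (rep w hw) k⁻¹ = blk _ := kron_blk (rep v hv k⁻¹) (rep w hw k⁻¹)
      rw [this, rep_inv, rep_inv]; rfl
    rw [e1, e2, hNd, hNd, blk_mul, blk_mul]
    congr 1
    funext i j
    rw [rep_inv, ← hβr, heq]
    simp only [hβr, Finset.sum_mul]
    rw [Finset.sum_comm]
    refine Finset.sum_congr rfl fun q _ => Finset.sum_congr rfl fun p _ => ?_
    simp only [smul_mul_assoc, mul_smul_comm, smul_smul]
    rw [mul_comm]
  · show rep v hv nn ⊗ₖ rep w hw nn = _
    rw [v_nn hv hvi, hω, Matrix.kronecker_smul, Matrix.one_kronecker_one]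
  · intro hz
    apply c0
    have : bcol (fun i => star (c i)) = bcol 0 := hz
    funext i
    have := congrFun (bcol_inj this) i
    simpa using this
  · intro f
    rw [hNd, blk_bcol, bcol_mul]
    congr 1
    funext i
    exact hZ f c (fun k j => by rw [hβr, hc]) i
  · intro k
    exact (equiv_iff (rep_mul_star hv k) (rep_mul_star hw k) c).2 (hc k)

end
end S17


/-- Let `r ≥ 1`, let `w` be an irreducible continuous unitary representation of `SU(2)` of
dimension `r + 1` and let `β_r = Ad ∘ w` be the adjoint action of `SU(2)` on
`F = Mat_{r+1}(ℂ)`.  Let `v` be any irreducible continuous unitary representation of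
`SU(2)` of dimension `3`.  Then there is no unital *-homomorphism `η : F → L(Hv) ⊗ F` with
`η (β_k f) = (Ad v(k) ⊗ β_k)(η f)` and `η(f) Z_v = Z_v (1 ⊗ f)` — that is, `v ⊗ β_r`
admits no structure of a full Hilbert bimodule representation of `SU(2)` — and `X_v` admits
no proper extension to a full bimodule representation: the range of the projection `E` of
any full structure is contained in `X_v`. -/
theorem stmt_17 (r : ℕ) (hr : 1 ≤ r)
    (w : SU2 → Fin (r + 1) → Fin (r + 1) → ℂ)
    (hw : RepData w) (hw_irr : IsIrr w)
    (βr : SU2 → (Matrix (Fin (r + 1)) (Fin (r + 1)) ℂ ≃⋆ₐ[ℂ] Matrix (Fin (r + 1)) (Fin (r + 1)) ℂ))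
    (hβr : ∀ (k : SU2) (f : Matrix (Fin (r + 1)) (Fin (r + 1)) ℂ),
      βr k f = Matrix.of (fun i j => w k i j) * f * star (Matrix.of (fun i j => w k i j)))
    (v : SU2 → Fin 3 → Fin 3 → ℂ)
    (hv : RepData v) (hv_irr : IsIrr v) :
    -- no full bimodule structure on all of Hv ⊗ F
    (¬ ∃ η : Matrix (Fin (r + 1)) (Fin (r + 1)) ℂ →
          Fin 3 → Fin 3 → Matrix (Fin (r + 1)) (Fin (r + 1)) ℂ,
        IsFullStructure βr v
          (fun i j => if i = j then (1 : Matrix (Fin (r + 1)) (Fin (r + 1)) ℂ) else 0) η) ∧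
    -- X_v admits no proper extension: the range of E is contained in X_v
    (∀ (E : Fin 3 → Fin 3 → Matrix (Fin (r + 1)) (Fin (r + 1)) ℂ)
       (η : Matrix (Fin (r + 1)) (Fin (r + 1)) ℂ →
          Fin 3 → Fin 3 → Matrix (Fin (r + 1)) (Fin (r + 1)) ℂ),
      IsFullStructure βr v E η →
      ∀ x : Fin 3 → Matrix (Fin (r + 1)) (Fin (r + 1)) ℂ,
        (∀ i, (∑ j, E i j * x j) = x i) →
        ∃ (n : ℕ) (c : Fin n → Fin 3 → Matrix (Fin (r + 1)) (Fin (r + 1)) ℂ)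
          (y : Fin n → Matrix (Fin (r + 1)) (Fin (r + 1)) ℂ),
          (∀ (a : Fin n) (k : SU2) (j : Fin 3), βr k (c a j) = ∑ i, v k i j • c a i) ∧
          (∀ i, x i = ∑ a, star (c a i) * y a)) := by
  have hβ : ∀ (k : SU2) (f : Matrix (Fin (r + 1)) (Fin (r + 1)) ℂ),
      βr k f = S17.rep w hw k * f * star (S17.rep w hw k) := hβr
  refine ⟨?_, ?_⟩
  · rintro ⟨η, h⟩
    obtain ⟨N, hN, h1, hU⟩ := S17.from_struct hr hw hw_irr βr hβ hv hv_irr _ η h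
    have hone : N 1 = 1 := by
      rw [h1]
      ext ⟨i, a⟩ ⟨j, b⟩
      by_cases hij : i = j
      · subst hij
        simp [S17.blk, Matrix.one_apply]
      · simp [S17.blk, Matrix.one_apply, hij]
    refine S17.part1_abs hw hv hv_irr fun k => ?_
    rw [← Matrix.trace_kronecker, ← S17.trace_abs (by simp) N hN hone, ← hU, hone, mul_one]
  · intro E η h x hx
    obtain ⟨N, hN, h1, hU⟩ := S17.from_struct hr hw hw_irr βr hβ hv hv_irr E η h
    obtain ⟨D, hD, hX⟩ := S17.part2_abs (S17.rep w hw) _ N hN hU (S17.bcol x) (by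
      rw [h1, S17.blk_bcol]
      congr 1
      funext i
      exact hx i)
    choose d hd using fun a => S17.bcol_surj (D a)
    refine ⟨(r + 1) * (r + 1), fun a i => star (d (finProdFinEquiv.symm a) i),
      fun a => Matrix.single (finProdFinEquiv.symm a).1 (finProdFinEquiv.symm a).2 1, ?_, ?_⟩
    · intro a k j
      beta_reduce
      have h2 := hD (finProdFinEquiv.symm a) k
      rw [hd] at h2
      generalize finProdFinEquiv.symm a = z at h2 ⊢
      have h3 := (S17.equiv_iff (S17.rep_mul_star hv k) (S17.rep_mul_star hw k) (fun i => star (d z i))).1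
        (by simpa only [star_star] using h2) j
      rw [hβ]
      exact h3
    · intro i
      simp only [star_star]
      rw [finProdFinEquiv.symm.sum_comp (fun a => d a i * Matrix.single a.1 a.2 (1 : ℂ))]
      have : S17.bcol x = S17.bcol (fun i => ∑ a, d a i * Matrix.single a.1 a.2 (1 : ℂ)) := by
        rw [hX]
        simp only [hd, S17.bcol_mul]
        ext ⟨i, a⟩ b
        simp [S17.bcol, Matrix.sum_apply]
      exact congrFun (S17.bcol_inj this) i

end
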